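/- Under the renewal setup together with the perturbation hypotheses: for all sufficiently small t ≠ 0, the operator (I − R(z,t))/(1 − (1 − (c/μ)M(|t|))z) is invertible for every z ∈ S¹ and its pointwise inverse belongs to A(𝒜), where 𝒜 is the Banach algebra of bounded operators on ℒ; moreover ‖ z ↦ ((I − R(z,t))/(1 − (1 − (c/μ)M(|t|))z))⁻¹ − z ↦ ((I − R(z))/(1 − z))⁻¹ ‖_{A(𝒜)} → 0 as t → 0, where the second function denotes the continuous extension to all of S¹ (including z = 1) of z ↦ ((I − R(z))/(1 − z))⁻¹. -/

import Mathlib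

/-!
The Wiener algebra `A(𝒜)` is realised as the commutant, in the bounded operators on `ℓ¹(ℤ, 𝒜)`, of
translations and right multiplications; an element is left convolution by its sequence of Fourier
coefficients. This makes `A(𝒜)` a Banach algebra, in which all operator-valued functions of the
problem live, so that every assertion becomes one about convergence and invertibility in `A(𝒜)`.

Invertibility in `A(𝒜)` is Wiener's lemma (`isUnit_of_ev`): a function with values in the units is
a unit. If `f` had no left inverse, it would lie in a maximal left ideal `J`; the central function
`z` acts on `A(𝒜)/J` with some spectral value `w`, which by maximality gives `z - w ∈ J`, and
`|w| = 1` as `z - w` is a unit otherwise. Then `f - f(w) ∈ J`, so the unit `f(w)` lies in `J`,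
a contradiction.

Write `B_t(z) = 1 - R(z,t)`, `λ_t = λ(1,t)`, `l_t = 1 - λ_t = (c + o(1)) M(|t|)`, and let `D_t` be
the difference quotient `(R(1,t) - R(z,t)) / (1 - z)`, which tends to `D_0` in `A(𝒜)` by dominated
convergence. A rank one projection `p_t → P` onto the `λ_t`-eigenspace of `R(1,t)`, with the same
kernel as `P`, is built in `perturbed_projection`. As `B_t p_t = l_t p_t + (1 - z) D_t p_t`,
one gets a factorization (`factor_inverse`)
`B_t = F_t (1 + Y_t)`, with `F_t = B_t (1 - p_t) + D_t p_t` and `Y_t = l_t F_t⁻¹ p_t - z p_t`.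
The limit `F_0 = B_0 (1 - P) + D_0 P` is a unit by Wiener's lemma (`isUnit_F₀`), so `F_t` is one too
for small `t`. On the range of `P` the factor `1 + Y_t` compresses to
`1 - z + l_t P F_t⁻¹ p_t = (1 - ρ_t z) (1 + M(|t|) (1 - ρ_t z)⁻¹ K_t)`, where
`ρ_t = 1 - (c/μ) M(|t|)` and `K_t` converges to a function vanishing at `z = 1`. The functions
`M(|t|) / (1 - ρ_t z)` are bounded in `A(𝒜)` since `M(|t|) = O(1 - |ρ_t|)`, and they concentrate at
`z = 1`, so their products with `K_t` tend to `0` (`tendsto_kernel_mul`). Hence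
`(1 - ρ_t z) B_t⁻¹` is given by a formula in convergent quantities, and converges in `A(𝒜)`.
-/

open MeasureTheory Filter Topology

/-- The `n`-th Fourier coefficient of a function `f : S¹ → 𝒜`. -/
noncomputable def fourierCoeffA {𝒜 : Type*} [NormedRing 𝒜] [NormedSpace ℂ 𝒜]
    (f : ℂ → 𝒜) (n : ℤ) : 𝒜 :=
  ((2 * (Real.pi : ℂ)))⁻¹ • ∫ θ in (0:ℝ)..(2 * Real.pi),
    Complex.exp (-(n : ℂ) * Complex.I * (θ : ℂ)) • f (Complex.exp (Complex.I * (θ : ℂ)))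

/-- `R(z) = Σ_{n} R_n zⁿ`. -/
noncomputable def renewalRz {L : Type*} [NormedAddCommGroup L] [NormedSpace ℂ L]
    (R : ℕ → L →L[ℂ] L) (z : ℂ) : L →L[ℂ] L := ∑' n : ℕ, z ^ n • R n

/-- `R(z,t) = Σ_{n} R_n(t) zⁿ`. -/
noncomputable def renewalRzt {L : Type*} [NormedAddCommGroup L] [NormedSpace ℂ L]
    (Rt : ℝ → ℕ → L →L[ℂ] L) (z : ℂ) (t : ℝ) : L →L[ℂ] L := ∑' n : ℕ, z ^ n • Rt t n

set_option linter.unusedSectionVars false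

namespace WienerAlg

/-! ### The Banach space `ℓ¹(ℤ, 𝒜)` -/

section Ell1

variable {𝒜 : Type*} [NormedRing 𝒜] [NormedAlgebra ℂ 𝒜]
variable {Y : Type*} [NormedAddCommGroup Y] [NormedSpace ℂ Y]

/-- The Banach space `ℓ¹(ℤ, 𝒜)`. -/
def Ell1 (𝒜 : Type*) [NormedRing 𝒜] : Type _ := lp (fun _ : ℤ => 𝒜) 1

noncomputable instance : NormedAddCommGroup (Ell1 𝒜) :=
  inferInstanceAs (NormedAddCommGroup (lp (fun _ : ℤ => 𝒜) 1))

noncomputable instance : NormedSpace ℂ (Ell1 𝒜) :=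
  inferInstanceAs (NormedSpace ℂ (lp (fun _ : ℤ => 𝒜) 1))

instance [CompleteSpace 𝒜] : CompleteSpace (Ell1 𝒜) :=
  inferInstanceAs (CompleteSpace (lp (fun _ : ℤ => 𝒜) 1))

instance : CoeFun (Ell1 𝒜) (fun _ => ℤ → 𝒜) := ⟨fun x => x.1⟩

lemma ell1_add_apply (x y : Ell1 𝒜) (n : ℤ) : (x + y) n = x n + y n := rfl

lemma ell1_smul_apply (c : ℂ) (x : Ell1 𝒜) (n : ℤ) : (c • x) n = c • x n := rfl

/-- The element of `ℓ¹(ℤ, 𝒜)` with value `a` at `n` and `0` elsewhere. -/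
noncomputable def sg (n : ℤ) : 𝒜 →L[ℂ] Ell1 𝒜 :=
  lp.singleContinuousLinearMap ℂ (fun _ : ℤ => 𝒜) 1 n

lemma sg_same (n : ℤ) (a : 𝒜) : sg n a n = a := lp.single_apply_self (E := fun _ : ℤ => 𝒜) 1 n a

lemma sg_ne {m n : ℤ} (h : m ≠ n) (a : 𝒜) : sg n a m = 0 :=
  lp.single_apply_ne (E := fun _ : ℤ => 𝒜) 1 n a h

lemma norm_sg (n : ℤ) (a : 𝒜) : ‖sg n a‖ = ‖a‖ :=
  lp.norm_single (E := fun _ : ℤ => 𝒜) (p := 1) (by simp) n a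

lemma hasSum_norm_ell1 (x : Ell1 𝒜) : HasSum (fun n => ‖x n‖) ‖x‖ := by
  have h := lp.hasSum_norm (E := fun _ : ℤ => 𝒜) (p := 1) (by simp) x
  simp only [ENNReal.toReal_one, Real.rpow_one] at h
  exact h

lemma hasSum_sg (x : Ell1 𝒜) : HasSum (fun n => sg n (x n)) x :=
  lp.hasSum_single (E := fun _ : ℤ => 𝒜) (p := 1) (by simp) x

lemma clm_ext {f g : Ell1 𝒜 →L[ℂ] Y} (h : ∀ n a, f (sg n a) = g (sg n a)) : f = g := by
  ext x
  have h1 := (hasSum_sg x).mapL f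
  have h2 := (hasSum_sg x).mapL g
  simp only [h] at h1
  exact h1.unique h2

lemma lift_summable {C : ℝ} (g : ℤ → 𝒜 →L[ℂ] Y) (hg : ∀ n a, ‖g n a‖ ≤ C * ‖a‖)
    (x : Ell1 𝒜) :
    Summable fun n => ‖g n (x n)‖ :=
  Summable.of_nonneg_of_le (fun _ => norm_nonneg _) (fun n => hg n (x n))
    ((hasSum_norm_ell1 x).summable.mul_left C)

variable [CompleteSpace Y]

/-- The universal property of `ℓ¹`: a uniformly bounded family `g n : 𝒜 → Y` assembles to the
bounded operator `x ↦ ∑ g n (x n)`. -/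
noncomputable def lift (C : ℝ) (g : ℤ → 𝒜 →L[ℂ] Y) (hg : ∀ n a, ‖g n a‖ ≤ C * ‖a‖) :
    Ell1 𝒜 →L[ℂ] Y :=
  LinearMap.mkContinuous
    { toFun := fun x => ∑' n, g n (x n)
      map_add' := fun x y => by
        rw [← (lift_summable g hg x).of_norm.tsum_add (lift_summable g hg y).of_norm]
        simp [ell1_add_apply]
      map_smul' := fun c x => by
        rw [RingHom.id_apply, ← (lift_summable g hg x).of_norm.tsum_const_smul]
        simp [ell1_smul_apply] } C (fun x => by
      rw [← (hasSum_norm_ell1 x).tsum_eq, ← tsum_mul_left]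
      exact (norm_tsum_le_tsum_norm (lift_summable g hg x)).trans
        ((lift_summable g hg x).tsum_le_tsum (fun n => hg n _)
          ((hasSum_norm_ell1 x).summable.mul_left C)))

variable {C : ℝ} {g : ℤ → 𝒜 →L[ℂ] Y} {hg : ∀ n a, ‖g n a‖ ≤ C * ‖a‖}

lemma norm_lift_le (hC : 0 ≤ C) : ‖lift C g hg‖ ≤ C := LinearMap.mkContinuous_norm_le _ hC _

lemma lift_apply (x : Ell1 𝒜) : lift C g hg x = ∑' n, g n (x n) := rfl

lemma lift_sg (n : ℤ) (a : 𝒜) : lift C g hg (sg n a) = g n a := by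
  rw [lift_apply, tsum_eq_single n]
  · rw [sg_same]
  · intro m hm
    rw [sg_ne hm, map_zero]

end Ell1

/-! ### The Wiener algebra -/

section Algebra

variable {𝒜 : Type*} [NormedRing 𝒜] [NormedAlgebra ℂ 𝒜] [CompleteSpace 𝒜]

/-- Translation by `n` on `ℓ¹(ℤ, 𝒜)`, i.e. multiplication by `zⁿ`. -/
noncomputable def shift (n : ℤ) : Ell1 𝒜 →L[ℂ] Ell1 𝒜 :=
  lift 1 (fun k => sg (k + n)) (fun _ _ => by rw [norm_sg, one_mul])

lemma shift_sg (n k : ℤ) (a : 𝒜) : shift n (sg k a) = sg (k + n) a := lift_sg _ _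

/-- Coefficientwise right multiplication by `a` on `ℓ¹(ℤ, 𝒜)`. -/
noncomputable def rmul (a : 𝒜) : Ell1 𝒜 →L[ℂ] Ell1 𝒜 :=
  lift ‖a‖ (fun k => (sg k).comp ((ContinuousLinearMap.mul ℂ 𝒜).flip a)) (fun k b => by
    rw [ContinuousLinearMap.comp_apply, norm_sg, mul_comm]
    exact norm_mul_le b a)

lemma rmul_sg (a : 𝒜) (k : ℤ) (b : 𝒜) : rmul a (sg k b) = sg k (b * a) := lift_sg _ _

/-- Coefficientwise left multiplication by `a` on `ℓ¹(ℤ, 𝒜)`. -/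
noncomputable def lmul (a : 𝒜) : Ell1 𝒜 →L[ℂ] Ell1 𝒜 :=
  lift ‖a‖ (fun k => (sg k).comp (ContinuousLinearMap.mul ℂ 𝒜 a)) (fun k b => by
    rw [ContinuousLinearMap.comp_apply, norm_sg]
    exact norm_mul_le a b)

lemma lmul_sg (a : 𝒜) (k : ℤ) (b : 𝒜) : lmul a (sg k b) = sg k (a * b) := lift_sg _ _

variable (𝒜) in
/-- The algebra of bounded operators on `ℓ¹(ℤ, 𝒜)` that commute with all translations and all
right multiplications by elements of `𝒜`. -/
noncomputable def wSub : Subalgebra ℂ (Ell1 𝒜 →L[ℂ] Ell1 𝒜) :=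
  Subalgebra.centralizer ℂ (Set.range shift ∪ Set.range rmul)

variable (𝒜) in
/-- The Wiener algebra `A(𝒜)`, realised as the commutant `wSub 𝒜`. An operator in it is
left convolution by its value at `sg 0 1`, the sequence of Fourier coefficients. -/
def WAlg : Type _ := wSub 𝒜

noncomputable instance : NormedRing (WAlg 𝒜) := inferInstanceAs (NormedRing (wSub 𝒜))

noncomputable instance : NormedAlgebra ℂ (WAlg 𝒜) := inferInstanceAs (NormedAlgebra ℂ (wSub 𝒜))

instance : CompleteSpace (WAlg 𝒜) :=
  (Set.isClosed_centralizer (Set.range (shift (𝒜 := 𝒜)) ∪ Set.range rmul)).completeSpace_coe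

lemma mem_wSub {T : Ell1 𝒜 →L[ℂ] Ell1 𝒜} :
    T ∈ wSub 𝒜 ↔ (∀ n x, T (shift n x) = shift n (T x)) ∧ ∀ a x, T (rmul a x) = rmul a (T x) := by
  rw [wSub, Subalgebra.mem_centralizer_iff]
  constructor
  · intro h
    exact ⟨fun n x => (DFunLike.congr_fun (h _ (Or.inl ⟨n, rfl⟩)) x).symm,
      fun a x => (DFunLike.congr_fun (h _ (Or.inr ⟨a, rfl⟩)) x).symm⟩
  · rintro ⟨h1, h2⟩ _ (⟨n, rfl⟩ | ⟨a, rfl⟩)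
    · ext1 x; exact (h1 n x).symm
    · ext1 x; exact (h2 a x).symm

lemma WAlg.map_shift (T : WAlg 𝒜) (n : ℤ) (x) : T.1 (shift n x) = shift n (T.1 x) :=
  (mem_wSub.1 T.2).1 n x

lemma WAlg.map_rmul (T : WAlg 𝒜) (a : 𝒜) (x) : T.1 (rmul a x) = rmul a (T.1 x) :=
  (mem_wSub.1 T.2).2 a x

/-- The sequence of Fourier coefficients of an element of the Wiener algebra. -/
noncomputable def coef (T : WAlg 𝒜) : Ell1 𝒜 := T.1 (sg 0 1)

lemma WAlg.map_sg (T : WAlg 𝒜) (n : ℤ) (a : 𝒜) : T.1 (sg n a) = shift n (rmul a (coef T)) := by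
  rw [coef, ← T.map_rmul, ← T.map_shift, rmul_sg, shift_sg, one_mul, zero_add]

lemma coef_injective : Function.Injective (coef (𝒜 := 𝒜)) := by
  intro T T' h
  apply Subtype.ext
  apply clm_ext
  intro n a
  rw [T.map_sg, T'.map_sg, h]

lemma clm_ext_apply {Y : Type*} [NormedAddCommGroup Y] [NormedSpace ℂ Y]
    {f g : Ell1 𝒜 →L[ℂ] Y} (h : ∀ n a, f (sg n a) = g (sg n a)) (x : Ell1 𝒜) : f x = g x := by
  rw [clm_ext h]

lemma shift_mem (n : ℤ) : (shift n : Ell1 𝒜 →L[ℂ] Ell1 𝒜) ∈ wSub 𝒜 := by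
  rw [mem_wSub]
  constructor
  · intro m x
    refine clm_ext_apply (f := (shift n).comp (shift m)) (g := (shift m).comp (shift n)) ?_ x
    intro k a
    simp only [ContinuousLinearMap.comp_apply, shift_sg]
    congr 2; ring
  · intro b x
    refine clm_ext_apply (f := (shift n).comp (rmul b)) (g := (rmul b).comp (shift n)) ?_ x
    intro k a
    simp only [ContinuousLinearMap.comp_apply, shift_sg, rmul_sg]

lemma lmul_mem (c : 𝒜) : lmul c ∈ wSub 𝒜 := by
  rw [mem_wSub]
  constructor
  · intro m x
    refine clm_ext_apply (f := (lmul c).comp (shift m)) (g := (shift m).comp (lmul c)) ?_ x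
    intro k a
    simp only [ContinuousLinearMap.comp_apply, shift_sg, lmul_sg]
  · intro b x
    refine clm_ext_apply (f := (lmul c).comp (rmul b)) (g := (rmul b).comp (lmul c)) ?_ x
    intro k a
    simp only [ContinuousLinearMap.comp_apply, lmul_sg, rmul_sg, mul_assoc]

/-- The monomial `zⁿ` in the Wiener algebra. -/
noncomputable def Sh (n : ℤ) : WAlg 𝒜 := ⟨shift n, shift_mem n⟩

lemma coef_Sh (n : ℤ) : coef (Sh n : WAlg 𝒜) = sg n 1 := by
  simp only [coef, Sh, shift_sg, zero_add]

lemma coef_mul (T T' : WAlg 𝒜) : coef (T * T') = T.1 (coef T') := rfl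

lemma coef_Sh_mul (n : ℤ) (T : WAlg 𝒜) : coef (Sh n * T) = shift n (coef T) := rfl

lemma coef_one : coef (1 : WAlg 𝒜) = sg 0 1 := rfl

lemma rmul_one (x : Ell1 𝒜) : rmul 1 x = x :=
  clm_ext_apply (f := rmul 1) (g := ContinuousLinearMap.id ℂ _)
    (fun n a => by rw [rmul_sg, mul_one]; rfl) x

/-- Monomials are central. -/
lemma Sh_comm (n : ℤ) (T : WAlg 𝒜) : Commute (Sh n) T := by
  apply coef_injective
  rw [coef_mul, coef_mul, coef_Sh, T.map_sg, rmul_one]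
  rfl

lemma Sh_zero : (Sh 0 : WAlg 𝒜) = 1 := coef_injective (by rw [coef_Sh, coef_one])

lemma Sh_add (m n : ℤ) : (Sh (m + n) : WAlg 𝒜) = Sh m * Sh n :=
  coef_injective (by rw [coef_Sh_mul, coef_Sh, coef_Sh, shift_sg, add_comm])

lemma Sh_natCast (n : ℕ) : (Sh (n : ℤ) : WAlg 𝒜) = Sh 1 ^ n := by
  induction n with
  | zero => simpa using Sh_zero
  | succ n ih => rw [Nat.cast_succ, Sh_add, ih, pow_succ]

lemma norm_Sh_le (n : ℤ) : ‖(Sh n : WAlg 𝒜)‖ ≤ 1 := by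
  change ‖(shift n : Ell1 𝒜 →L[ℂ] Ell1 𝒜)‖ ≤ 1
  exact norm_lift_le zero_le_one

/-- The embedding of `𝒜` in its Wiener algebra as the constant functions. -/
noncomputable def cst : 𝒜 →ₐ[ℂ] WAlg 𝒜 :=
  AlgHom.ofLinearMap
    { toFun := fun a => ⟨lmul a, lmul_mem a⟩
      map_add' := fun a b => Subtype.ext <| clm_ext fun n c => by
        change lmul (a + b) (sg n c) = lmul a (sg n c) + lmul b (sg n c)
        simp only [lmul_sg, add_mul, map_add]
      map_smul' := fun a b => Subtype.ext <| clm_ext fun n c => by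
        change lmul (a • b) (sg n c) = a • lmul b (sg n c)
        simp only [lmul_sg, smul_mul_assoc, map_smul] }
    (Subtype.ext <| clm_ext fun n c => by
      change lmul 1 (sg n c) = sg n c
      rw [lmul_sg, one_mul])
    (fun a b => Subtype.ext <| clm_ext fun n c => by
      change lmul (a * b) (sg n c) = lmul a (lmul b (sg n c))
      simp only [lmul_sg, mul_assoc])

lemma cst_val (a : 𝒜) : (cst a : WAlg 𝒜).1 = lmul a := rfl

lemma norm_cst_le (a : 𝒜) : ‖(cst a : WAlg 𝒜)‖ ≤ ‖a‖ := by
  change ‖lmul a‖ ≤ ‖a‖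
  exact norm_lift_le (norm_nonneg _)

lemma coef_cst_mul_Sh (a : 𝒜) (n : ℤ) : coef (cst a * Sh n) = sg n a := by
  rw [coef_mul, coef_Sh, cst_val, lmul_sg, mul_one]

variable [NormOneClass 𝒜]

lemma norm_coef_le (T : WAlg 𝒜) : ‖coef T‖ ≤ ‖T‖ := by
  have := T.1.le_opNorm (sg 0 1)
  rwa [norm_sg, norm_one, mul_one] at this

/-- `coef` as a bounded operator. -/
noncomputable def coefL : WAlg 𝒜 →L[ℂ] Ell1 𝒜 :=
  LinearMap.mkContinuous
    { toFun := coef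
      map_add' := fun _ _ => rfl
      map_smul' := fun _ _ => rfl } 1 (fun T => by rw [one_mul]; exact norm_coef_le T)

lemma coefL_apply (T : WAlg 𝒜) : coefL T = coef T := rfl

/-- Every element of the Wiener algebra is the norm-convergent sum of its Fourier series. -/
lemma hasSum_coef (T : WAlg 𝒜) : HasSum (fun n => cst (coef T n) * Sh n) T := by
  have hs : Summable fun n => cst (coef T n) * Sh n := by
    refine Summable.of_norm_bounded (hasSum_norm_ell1 (coef T)).summable fun n => ?_
    calc _ ≤ ‖cst (coef T n)‖ * ‖(Sh n : WAlg 𝒜)‖ := norm_mul_le _ _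
      _ ≤ ‖coef T n‖ * 1 := by gcongr; exacts [norm_cst_le _, norm_Sh_le _]
      _ = _ := mul_one _
  convert hs.hasSum
  apply coef_injective
  have h1 := hs.hasSum.mapL coefL
  simp only [coefL_apply, coef_cst_mul_Sh] at h1
  exact (hasSum_sg _).unique h1

/-- Summation of a Laurent series at a point `z` of the unit circle, on `ℓ¹(ℤ, 𝒜)`. -/
noncomputable def evX (z : Circle) : Ell1 𝒜 →L[ℂ] 𝒜 :=
  lift 1 (fun n => ((z : ℂ) ^ n) • ContinuousLinearMap.id ℂ 𝒜) (fun n a => by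
    rw [smul_apply, norm_smul, norm_zpow, Circle.norm_coe, one_zpow]; rfl)

lemma evX_sg (z : Circle) (n : ℤ) (a : 𝒜) : evX z (sg n a) = (z : ℂ) ^ n • a := lift_sg _ _

lemma evX_shift (z : Circle) (n : ℤ) (x : Ell1 𝒜) : evX z (shift n x) = (z : ℂ) ^ n • evX z x := by
  refine clm_ext_apply (f := (evX z).comp (shift n)) (g := (z : ℂ) ^ n • evX z) ?_ x
  intro k a
  simp only [ContinuousLinearMap.comp_apply, shift_sg, evX_sg, smul_apply,
    smul_smul]
  rw [add_comm, zpow_add₀ (Circle.coe_ne_zero z)]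

lemma evX_rmul (z : Circle) (a : 𝒜) (x : Ell1 𝒜) : evX z (rmul a x) = evX z x * a := by
  refine clm_ext_apply (f := (evX z).comp (rmul a))
    (g := ((ContinuousLinearMap.mul ℂ 𝒜).flip a).comp (evX z)) ?_ x
  intro k b
  simp [evX_sg, rmul_sg]

lemma evX_map (z : Circle) (T : WAlg 𝒜) (x : Ell1 𝒜) :
    evX z (T.1 x) = evX z (coef T) * evX z x := by
  refine clm_ext_apply (f := (evX z).comp T.1)
    (g := (ContinuousLinearMap.mul ℂ 𝒜 (evX z (coef T))).comp (evX z)) ?_ x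
  intro k b
  simp only [ContinuousLinearMap.comp_apply, T.map_sg, evX_shift, evX_rmul, evX_sg,
    ContinuousLinearMap.mul_apply', mul_smul_comm]

/-- Evaluation at a point of the unit circle, an algebra homomorphism `A(𝒜) → 𝒜`. -/
noncomputable def ev (z : Circle) : WAlg 𝒜 →ₐ[ℂ] 𝒜 :=
  AlgHom.ofLinearMap ((evX z).comp coefL).toLinearMap
    (by
      change evX z (coef 1) = 1
      rw [coef_one, evX_sg, zpow_zero, one_smul])
    (fun T T' => evX_map z T (coef T'))

lemma ev_apply (z : Circle) (T : WAlg 𝒜) : ev z T = evX z (coef T) := rfl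

lemma ev_continuous (z : Circle) : Continuous (ev z : WAlg 𝒜 → 𝒜) :=
  ((evX z).comp coefL).continuous

lemma ev_Sh (z : Circle) (n : ℤ) : ev z (Sh n : WAlg 𝒜) = algebraMap ℂ 𝒜 ((z : ℂ) ^ n) := by
  rw [ev_apply, coef_Sh, evX_sg, Algebra.algebraMap_eq_smul_one]

lemma ev_cst (z : Circle) (a : 𝒜) : ev z (cst a) = a := by
  have := coef_cst_mul_Sh a 0
  rw [Sh_zero, mul_one] at this
  rw [ev_apply, this, evX_sg, zpow_zero, one_smul]

/-- The function on the circle (extended by junk values to the plane) given by an element of the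
Wiener algebra. -/
noncomputable def evF (T : WAlg 𝒜) (z : ℂ) : 𝒜 := ∑' n : ℤ, z ^ n • coef T n

lemma evF_coe (T : WAlg 𝒜) (z : Circle) : evF T z = ev z T := rfl

lemma evF_sub (T T' : WAlg 𝒜) {z : ℂ} (hz : z ∈ Metric.sphere (0 : ℂ) 1) :
    evF (T - T') z = evF T z - evF T' z := by
  obtain ⟨w, rfl⟩ : ∃ w : Circle, (w : ℂ) = z := ⟨⟨z, hz⟩, rfl⟩
  simp only [evF_coe, map_sub]

lemma evF_continuousOn (T : WAlg 𝒜) : ContinuousOn (evF T) (Metric.sphere (0 : ℂ) 1) := by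
  refine continuousOn_tsum (u := fun n => ‖coef T n‖) ?_ (hasSum_norm_ell1 _).summable ?_
  · intro n
    refine ContinuousOn.smul ?_ continuousOn_const
    refine continuousOn_id.zpow₀ n ?_
    rintro z hz
    left
    rintro rfl
    simp at hz
  · intro n z hz
    have : ‖z‖ = 1 := by simpa using hz
    rw [norm_smul, norm_zpow, this, one_zpow, one_mul]

lemma fourierCoeffA_congr {f g : ℂ → 𝒜} (h : Set.EqOn f g (Metric.sphere 0 1)) (n : ℤ) :
    fourierCoeffA f n = fourierCoeffA g n := by
  unfold fourierCoeffA
  congr 2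
  ext θ
  rw [h]
  simp [Complex.norm_exp]

lemma integral_exp_int (k : ℤ) :
    ∫ θ in (0:ℝ)..(2 * Real.pi), Complex.exp ((k : ℂ) * Complex.I * θ)
      = if k = 0 then 2 * (Real.pi : ℂ) else 0 := by
  split_ifs with h
  · simp [h]
  · have hc : (k : ℂ) * Complex.I ≠ 0 := mul_ne_zero (by exact_mod_cast h) Complex.I_ne_zero
    rw [integral_exp_mul_complex hc]
    have : Complex.exp ((k : ℂ) * Complex.I * ((2 * Real.pi : ℝ) : ℂ)) = 1 := by
      rw [← Complex.exp_int_mul_two_pi_mul_I k]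
      congr 1
      push_cast; ring
    rw [this]
    simp

lemma fourierCoeffA_evF (T : WAlg 𝒜) (n : ℤ) : fourierCoeffA (evF T) n = coef T n := by
  set x := coef T with hx
  let f : ℤ → C(ℝ, 𝒜) := fun k =>
    ⟨fun θ => Complex.exp (((k - n : ℤ) : ℂ) * Complex.I * θ) • x k, by fun_prop⟩
  have hf : ∀ k θ, ‖f k θ‖ = ‖x k‖ := by
    intro k θ
    simp [f, norm_smul, Complex.norm_exp]
  have hsum := intervalIntegral.hasSum_intervalIntegral_of_summable_norm (a := 0) (b := 2 * Real.pi)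
    (f := f) (by
      refine Summable.of_nonneg_of_le (fun _ => norm_nonneg _) (fun k => ?_)
        (hasSum_norm_ell1 x).summable
      refine (ContinuousMap.norm_le _ (norm_nonneg _)).2 fun θ => ?_
      exact (hf k θ).le)
  have h1 : ∀ k, ∫ θ in (0:ℝ)..(2 * Real.pi), f k θ =
      if k = n then (2 * (Real.pi : ℂ)) • x n else 0 := by
    intro k
    change ∫ θ in (0:ℝ)..(2 * Real.pi),
      Complex.exp (((k - n : ℤ) : ℂ) * Complex.I * θ) • x k = _
    rw [intervalIntegral.integral_smul_const, integral_exp_int]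
    by_cases h : k = n
    · subst h
      simp
    · simp [h, sub_eq_zero]
  simp only [h1] at hsum
  have h2 := hsum.unique (hasSum_ite_eq n _)
  have h3 : ∀ θ : ℝ, Complex.exp (-(n : ℂ) * Complex.I * (θ : ℂ)) •
      evF T (Complex.exp (Complex.I * (θ : ℂ))) = ∑' k, f k θ := by
    intro θ
    rw [evF, ← tsum_const_smul'']
    congr 1
    ext k
    change _ = Complex.exp (((k - n : ℤ) : ℂ) * Complex.I * θ) • x k
    rw [smul_smul, ← Complex.exp_int_mul, ← Complex.exp_add]
    congr 2
    push_cast; ring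
  rw [fourierCoeffA]
  simp only [h3]
  rw [h2, smul_smul, inv_mul_cancel₀ (by simp [Real.pi_ne_zero]), one_smul]

lemma summable_fourierCoeffA (T : WAlg 𝒜) : Summable fun n => ‖fourierCoeffA (evF T) n‖ := by
  simp only [fourierCoeffA_evF]
  exact (hasSum_norm_ell1 _).summable

lemma tsum_fourierCoeffA_le (T : WAlg 𝒜) : ∑' n, ‖fourierCoeffA (evF T) n‖ ≤ ‖T‖ := by
  simp only [fourierCoeffA_evF]
  rw [(hasSum_norm_ell1 _).tsum_eq]
  exact norm_coef_le T

end Algebra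

/-! ### Wiener's lemma -/

section Wiener
variable {𝒜 : Type*} [NormedRing 𝒜] [NormedAlgebra ℂ 𝒜] [CompleteSpace 𝒜] [NormOneClass 𝒜]

lemma Sh_mul_Sh_neg (n : ℤ) : (Sh n * Sh (-n) : WAlg 𝒜) = 1 := by
  rw [← Sh_add, add_neg_cancel, Sh_zero]

instance : NormOneClass (WAlg 𝒜) := ⟨by
  refine le_antisymm (by rw [← Sh_zero]; exact norm_Sh_le 0) ?_
  have := norm_coef_le (1 : WAlg 𝒜)
  rwa [coef_one, norm_sg, norm_one] at this⟩

lemma isUnit_Sh_sub (w : ℂ) (hw : ‖w‖ ≠ 1) : IsUnit (Sh 1 - algebraMap ℂ (WAlg 𝒜) w) := by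
  rcases lt_or_gt_of_ne hw with h | h
  · have h1 : Sh 1 - algebraMap ℂ (WAlg 𝒜) w = Sh 1 * (1 - w • Sh (-1)) := by
      rw [mul_sub, mul_one, mul_smul_comm, Sh_mul_Sh_neg, Algebra.algebraMap_eq_smul_one]
    rw [h1]
    refine IsUnit.mul ?_ (isUnit_one_sub_of_norm_lt_one ?_)
    · refine ⟨⟨Sh 1, Sh (-1), Sh_mul_Sh_neg 1, ?_⟩, rfl⟩
      simpa using Sh_mul_Sh_neg (𝒜 := 𝒜) (-1)
    · rw [norm_smul]
      nlinarith [norm_Sh_le (𝒜 := 𝒜) (-1), norm_nonneg w]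
  · have hw0 : w ≠ 0 := by rintro rfl; simp at h; linarith
    have h1 : Sh 1 - algebraMap ℂ (WAlg 𝒜) w = -(w • (1 - w⁻¹ • Sh 1)) := by
      rw [smul_sub, smul_smul, mul_inv_cancel₀ hw0, one_smul, Algebra.algebraMap_eq_smul_one,
        neg_sub]
    rw [h1]
    refine (IsUnit.neg ?_)
    have : IsUnit (1 - w⁻¹ • (Sh 1 : WAlg 𝒜)) := isUnit_one_sub_of_norm_lt_one (by
      rw [norm_smul, norm_inv]
      have := inv_lt_one_of_one_lt₀ h
      nlinarith [norm_Sh_le (𝒜 := 𝒜) 1, inv_nonneg.2 (norm_nonneg w)])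
    simpa using this.smul (Units.mk0 w hw0)

/-- In the simple module `A(𝒜)/J`, the central element `z` acts as a scalar `w` by the
Gelfand–Mazur argument; `w` has modulus one because `z - w` is invertible otherwise. -/
lemma exists_Sh_sub_mem (J : Ideal (WAlg 𝒜)) [hJ : J.IsMaximal] :
    ∃ w : Circle, Sh 1 - algebraMap ℂ (WAlg 𝒜) w ∈ J := by
  let K : Submodule ℂ (WAlg 𝒜) := J.restrictScalars ℂ
  have hKc : IsClosed (K : Set (WAlg 𝒜)) := Ideal.IsMaximal.isClosed (I := J)
  have := hKc
  have hcomm : ∀ (w : ℂ) (x : WAlg 𝒜), (Sh 1 - algebraMap ℂ (WAlg 𝒜) w) * x =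
      x * (Sh 1 - algebraMap ℂ (WAlg 𝒜) w) := fun w x =>
    ((Sh_comm 1 x).sub_left (Algebra.commutes w x))
  have hnt : Nontrivial (WAlg 𝒜 ⧸ K) := by
    refine Submodule.Quotient.nontrivial_iff.2 ?_
    intro h
    apply hJ.ne_top
    rw [Ideal.eq_top_iff_one]
    have : (1 : WAlg 𝒜) ∈ K := h ▸ Submodule.mem_top
    exact this
  -- multiplication by `z` on the quotient
  let m : WAlg 𝒜 ⧸ K →L[ℂ] WAlg 𝒜 ⧸ K := K.liftQL
    (K.mkQL.comp (ContinuousLinearMap.mul ℂ (WAlg 𝒜) (Sh 1))) (by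
      intro x hx
      change K.mkQ (Sh 1 * x) = 0
      rw [Submodule.mkQ_apply, Submodule.Quotient.mk_eq_zero]
      exact J.mul_mem_left _ hx)
  have hm : ∀ x : WAlg 𝒜, m (K.mkQ x) = K.mkQ (Sh 1 * x) := fun x => rfl
  obtain ⟨w, hw⟩ := spectrum.nonempty m
  have hmem : Sh 1 - algebraMap ℂ (WAlg 𝒜) w ∈ J := by
    by_contra hnot
    apply hw
    rw [spectrum.mem_resolventSet_iff, ← IsUnit.neg_iff, neg_sub, ContinuousLinearMap.isUnit_iff_bijective]
    have hmw : ∀ x : WAlg 𝒜, (m - algebraMap ℂ _ w) (K.mkQ x) =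
        K.mkQ ((Sh 1 - algebraMap ℂ (WAlg 𝒜) w) * x) := by
      intro x
      rw [sub_mul, map_sub, ← hm, Algebra.algebraMap_eq_smul_one, Algebra.algebraMap_eq_smul_one,
        smul_mul_assoc, one_mul, map_smul]
      rfl
    constructor
    · rw [injective_iff_map_eq_zero]
      intro y hy
      obtain ⟨x, rfl⟩ := K.mkQ_surjective y
      rw [hmw, Submodule.mkQ_apply, Submodule.Quotient.mk_eq_zero] at hy
      rw [Submodule.mkQ_apply, Submodule.Quotient.mk_eq_zero]
      let I : Ideal (WAlg 𝒜) :=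
        { carrier := {x | (Sh 1 - algebraMap ℂ (WAlg 𝒜) w) * x ∈ J}
          add_mem' := fun {a b} ha hb => by
            rw [Set.mem_ofPred_eq, mul_add]; exact J.add_mem ha hb
          zero_mem' := by simp
          smul_mem' := fun c x hx => by
            rw [Set.mem_ofPred_eq, smul_eq_mul, ← mul_assoc, hcomm, mul_assoc]
            exact J.mul_mem_left _ hx }
      have hI : J = I := hJ.eq_of_le (by
        rw [Ne, Ideal.eq_top_iff_one]
        intro h1
        apply hnot
        simpa using (show (Sh 1 - algebraMap ℂ (WAlg 𝒜) w) * 1 ∈ J from h1))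
        (fun x hx => J.mul_mem_left _ hx)
      change x ∈ J
      rw [hI]
      exact hy
    · intro y
      obtain ⟨x, rfl⟩ := K.mkQ_surjective y
      obtain ⟨a, j, hj, h1⟩ := hJ.exists_inv hnot
      refine ⟨K.mkQ (x * a), ?_⟩
      rw [hmw, hcomm]
      rw [← sub_eq_zero, ← map_sub, Submodule.mkQ_apply, Submodule.Quotient.mk_eq_zero]
      change _ ∈ J
      have : x * a * (Sh 1 - algebraMap ℂ (WAlg 𝒜) w) - x = -(x * j) := by
        rw [mul_assoc, eq_sub_of_add_eq h1]; noncomm_ring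
      rw [this]
      exact J.neg_mem (J.mul_mem_left _ hj)
  have hw1 : ‖w‖ = 1 := by
    by_contra h
    exact hJ.ne_top (J.eq_top_of_isUnit_mem hmem (isUnit_Sh_sub w h))
  exact ⟨⟨w, by simpa [Submonoid.unitSphere] using hw1⟩, hmem⟩

lemma Sh_sub_mem (J : Ideal (WAlg 𝒜)) (w : Circle) (h : Sh 1 - algebraMap ℂ (WAlg 𝒜) w ∈ J)
    (n : ℤ) : Sh n - algebraMap ℂ (WAlg 𝒜) ((w : ℂ) ^ n) ∈ J := by
  have hw := Circle.coe_ne_zero w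
  induction n with
  | zero => simp [Sh_zero]
  | succ n ih =>
    have : (Sh ((n : ℤ) + 1) : WAlg 𝒜) - algebraMap ℂ (WAlg 𝒜) ((w : ℂ) ^ ((n : ℤ) + 1)) =
        Sh n * (Sh 1 - algebraMap ℂ (WAlg 𝒜) w) + algebraMap ℂ (WAlg 𝒜) w *
          (Sh n - algebraMap ℂ (WAlg 𝒜) ((w : ℂ) ^ (n : ℤ))) := by
      rw [Sh_add, zpow_add_one₀ hw, mul_comm, map_mul, Algebra.commutes]
      have := Algebra.commutes (w : ℂ) (Sh n : WAlg 𝒜)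
      rw [mul_sub, mul_sub, this, Algebra.commutes]
      noncomm_ring
    rw [this]
    exact J.add_mem (J.mul_mem_left _ h) (J.mul_mem_left _ ih)
  | pred n ih =>
    have : (Sh (-(n : ℤ) - 1) : WAlg 𝒜) - algebraMap ℂ (WAlg 𝒜) ((w : ℂ) ^ (-(n : ℤ) - 1)) =
        algebraMap ℂ (WAlg 𝒜) (w : ℂ)⁻¹ * (Sh (-(n : ℤ)) -
          algebraMap ℂ (WAlg 𝒜) ((w : ℂ) ^ (-(n : ℤ)))) -
        (algebraMap ℂ (WAlg 𝒜) (w : ℂ)⁻¹ * Sh (-(n : ℤ) - 1)) *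
          (Sh 1 - algebraMap ℂ (WAlg 𝒜) w) := by
      have h1 : (Sh (-(n : ℤ)) : WAlg 𝒜) = Sh (-(n : ℤ) - 1) * Sh 1 := by
        rw [← Sh_add, sub_add_cancel]
      have h2 : algebraMap ℂ (WAlg 𝒜) (w : ℂ)⁻¹ * algebraMap ℂ (WAlg 𝒜) w = 1 := by
        rw [← map_mul, inv_mul_cancel₀ hw, map_one]
      rw [mul_sub, mul_sub, mul_assoc _ _ (algebraMap ℂ (WAlg 𝒜) w),
        ← Algebra.commutes (w : ℂ) (Sh (-(n : ℤ) - 1) : WAlg 𝒜), ← mul_assoc _ _ (Sh _), h2,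
        one_mul, ← map_mul, mul_comm, ← zpow_sub_one₀ hw, h1, mul_assoc]
      abel
    rw [this]
    exact J.sub_mem (J.mul_mem_left _ ih) (J.mul_mem_left _ h)

/-- A closed left ideal containing `z - w` contains every function up to its value at `w`. -/
lemma sub_cst_ev_mem (J : Ideal (WAlg 𝒜)) (hJ : IsClosed (J : Set (WAlg 𝒜))) (w : Circle)
    (h : Sh 1 - algebraMap ℂ (WAlg 𝒜) w ∈ J) (T : WAlg 𝒜) : T - cst (ev w T) ∈ J := by
  have h1 := hasSum_coef T
  have hc : Continuous (cst : 𝒜 → WAlg 𝒜) :=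
    AddMonoidHomClass.continuous_of_bound (cst (𝒜 := 𝒜)) 1
      (fun a => by rw [one_mul]; exact norm_cst_le a)
  have h2 := (h1.map (ev w) (ev_continuous w)).map (cst (𝒜 := 𝒜)) hc
  refine hJ.mem_of_tendsto (h1.sub h2) (Eventually.of_forall fun s => ?_)
  refine J.sum_mem fun n _ => ?_
  have : cst (coef T n) * Sh n - (cst ∘ (ev w) ∘ fun n => cst (coef T n) * Sh n) n =
      cst (coef T n) * (Sh n - algebraMap ℂ (WAlg 𝒜) ((w : ℂ) ^ n)) := by
    simp only [Function.comp_apply, map_mul, ev_cst, ev_Sh, mul_sub, AlgHom.commutes]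
  simp only [Function.comp_apply] at this ⊢
  rw [this]
  exact J.mul_mem_left _ (Sh_sub_mem J w h n)

lemma exists_left_inverse (T : WAlg 𝒜) (hT : ∀ z : Circle, IsUnit (ev z T)) :
    ∃ G : WAlg 𝒜, G * T = 1 := by
  by_contra! hno
  have hne : (Ideal.span {T} : Ideal (WAlg 𝒜)) ≠ ⊤ := by
    rw [Ne, Ideal.eq_top_iff_one, Ideal.mem_span_singleton']
    rintro ⟨a, ha⟩
    exact hno a ha
  obtain ⟨J, hJ, hle⟩ := Ideal.exists_le_maximal _ hne
  obtain ⟨w, hw⟩ := exists_Sh_sub_mem J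
  have h1 := sub_cst_ev_mem J Ideal.IsMaximal.isClosed w hw T
  have h2 : T ∈ J := hle (Ideal.mem_span_singleton_self T)
  have h3 : cst (ev w T) ∈ J := by simpa using J.sub_mem h2 h1
  exact hJ.ne_top (J.eq_top_of_isUnit_mem h3 ((hT w).map cst))

/-- Wiener's lemma for operator-valued functions. -/
theorem isUnit_of_ev (T : WAlg 𝒜) (hT : ∀ z : Circle, IsUnit (ev z T)) : IsUnit T := by
  obtain ⟨G, hG⟩ := exists_left_inverse T hT
  obtain ⟨H, hH⟩ := exists_left_inverse G (fun z => by
    have h := congrArg (ev z) hG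
    rw [map_mul, map_one] at h
    obtain ⟨u, hu⟩ := hT z
    rw [← hu] at h
    rw [Units.mul_eq_one_iff_eq_inv.1 h]
    exact u⁻¹.isUnit)
  have : H = T := by rw [← mul_one H, ← hG, ← mul_assoc, hH, one_mul]
  subst this
  exact ⟨⟨H, G, hH, hG⟩, rfl⟩

end Wiener

/-! ### Kernels concentrating at `z = 1` -/

section Kernel
variable {𝒜 : Type*} [NormedRing 𝒜] [NormedAlgebra ℂ 𝒜] [CompleteSpace 𝒜] [NormOneClass 𝒜]

lemma isUnit_one_sub_smul_Sh {ρ : ℂ} (h : ‖ρ‖ < 1) : IsUnit (1 - ρ • (Sh 1 : WAlg 𝒜)) :=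
  isUnit_one_sub_of_norm_lt_one (by
    rw [norm_smul]
    nlinarith [norm_Sh_le (𝒜 := 𝒜) 1, norm_nonneg ρ])

lemma norm_inverse_one_sub_smul_Sh_le {ρ : ℂ} (h : ‖ρ‖ < 1) :
    ‖Ring.inverse (1 - ρ • (Sh 1 : WAlg 𝒜))‖ ≤ (1 - ‖ρ‖)⁻¹ := by
  have h0 : ‖ρ • (Sh 1 : WAlg 𝒜)‖ ≤ ‖ρ‖ := by
    rw [norm_smul]
    nlinarith [norm_Sh_le (𝒜 := 𝒜) 1, norm_nonneg ρ]
  rw [← geom_series_eq_inverse _ (h0.trans_lt h)]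
  refine (tsum_geometric_le_of_norm_lt_one _ (h0.trans_lt h)).trans ?_
  rw [norm_one, sub_self, zero_add]
  gcongr

lemma inverse_comm_of_central {A : Type*} [Ring A] {a : A} (ha : ∀ x, Commute a x) (x : A) :
    Commute (Ring.inverse a) x := by
  by_cases h : IsUnit a
  · obtain ⟨u, rfl⟩ := h
    rw [Ring.inverse_unit]
    exact (ha x).units_inv_left
  · rw [Ring.inverse_non_unit _ h]
    exact Commute.zero_left x

/-- The functions `M(t) / (1 - ρ(t) z)` stay bounded in the Wiener algebra and concentrate at
`z = 1`: their product with a function vanishing at `1` tends to `0`. -/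
lemma tendsto_kernel_mul {ι : Type*} {l : Filter ι} {M : ι → ℝ} {ρ : ι → ℂ} {C : ℝ}
    (hM : Tendsto M l (𝓝 0)) (hρ : Tendsto ρ l (𝓝 1)) (hρ1 : ∀ᶠ t in l, ‖ρ t‖ < 1)
    (hMρ : ∀ᶠ t in l, |M t| ≤ C * (1 - ‖ρ t‖)) {K : ι → WAlg 𝒜} {K₀ : WAlg 𝒜}
    (hK : Tendsto K l (𝓝 K₀)) (hK₀ : ev 1 K₀ = 0) :
    Tendsto (fun t => ((M t : ℂ) • Ring.inverse (1 - ρ t • (Sh 1 : WAlg 𝒜))) * K t) l (𝓝 0) := by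
  set E : ι → WAlg 𝒜 := fun t => (M t : ℂ) • Ring.inverse (1 - ρ t • (Sh 1 : WAlg 𝒜)) with hE
  have hbd : ∀ᶠ t in l, ‖E t‖ ≤ C := by
    filter_upwards [hρ1, hMρ] with t h1 h2
    have h3 : 0 < 1 - ‖ρ t‖ := by linarith
    calc ‖E t‖ = |M t| * ‖Ring.inverse (1 - ρ t • (Sh 1 : WAlg 𝒜))‖ := by
          simp [hE, norm_smul]
      _ ≤ (C * (1 - ‖ρ t‖)) * (1 - ‖ρ t‖)⁻¹ := by
          gcongr
          · exact (abs_nonneg _).trans h2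
          · exact norm_inverse_one_sub_smul_Sh_le h1
      _ = C := by field_simp
  have hcent : ∀ t x, Commute (E t) x := by
    intro t x
    refine Commute.smul_left (inverse_comm_of_central (fun y => ?_) x) _
    exact (Commute.one_left y).sub_left ((Sh_comm 1 y).smul_left _)
  let J : Ideal (WAlg 𝒜) :=
    { carrier := {X | Tendsto (fun t => E t * X) l (𝓝 0)}
      add_mem' := fun {a b} ha hb => by
        simpa [mul_add] using Tendsto.add ha hb
      zero_mem' := by simpa using tendsto_const_nhds
      smul_mem' := fun c x hx => by
        have : ∀ t, E t * (c • x) = c * (E t * x) := fun t => by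
          rw [smul_eq_mul, ← mul_assoc, (hcent t c).eq, mul_assoc]
        have h := Tendsto.const_mul c hx
        rw [mul_zero] at h
        exact h.congr fun t => (this t).symm }
  have hJmem : ∀ X, X ∈ J ↔ Tendsto (fun t => E t * X) l (𝓝 0) := fun X => Iff.rfl
  have hJ : IsClosed (J : Set (WAlg 𝒜)) := by
    refine isClosed_of_closure_subset fun X hX => ?_
    rw [SetLike.mem_coe, hJmem, Metric.tendsto_nhds]
    intro ε hε
    obtain ⟨Y, hY, hXY⟩ := Metric.mem_closure_iff.1 hX (ε / (2 * (|C| + 1))) (by positivity)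
    have hY' := (Metric.tendsto_nhds.1 ((hJmem Y).1 hY)) (ε / 2) (by positivity)
    filter_upwards [hY', hbd] with t h1 h2
    rw [dist_zero_right] at h1 ⊢
    rw [dist_eq_norm] at hXY
    have h3 : E t * X = E t * (X - Y) + E t * Y := by noncomm_ring
    calc ‖E t * X‖ ≤ ‖E t‖ * ‖X - Y‖ + ‖E t * Y‖ := by
          rw [h3]; exact (norm_add_le _ _).trans (by gcongr; exact norm_mul_le _ _)
      _ ≤ (|C| + 1) * ‖X - Y‖ + ‖E t * Y‖ := by
          gcongr; linarith [le_abs_self C]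
      _ < (|C| + 1) * (ε / (2 * (|C| + 1))) + ε / 2 := by gcongr
      _ = ε := by field_simp; ring
  have hS : Sh 1 - algebraMap ℂ (WAlg 𝒜) ((1 : Circle) : ℂ) ∈ J := by
    rw [hJmem]
    have h1 : ∀ᶠ t in l, (1 - ρ t) • (Sh 1 * E t) - (M t : ℂ) • (1 : WAlg 𝒜) =
        E t * (Sh 1 - algebraMap ℂ (WAlg 𝒜) ((1 : Circle) : ℂ)) := by
      filter_upwards [hρ1] with t ht
      have h2 : E t * (1 - ρ t • (Sh 1 : WAlg 𝒜)) = (M t : ℂ) • (1 : WAlg 𝒜) := by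
        rw [hE, smul_mul_assoc, Ring.inverse_mul_cancel _ (isUnit_one_sub_smul_Sh ht)]
      rw [← h2, Circle.coe_one, map_one, ← (hcent t (Sh 1)).eq, mul_sub, mul_sub, mul_one,
        mul_smul_comm, sub_smul, one_smul]
      abel
    refine Tendsto.congr' h1 ?_
    have hz : Tendsto (fun t => 1 - ρ t) l (𝓝 0) := by simpa using hρ.const_sub 1
    have ha : Tendsto (fun t => (1 - ρ t) • (Sh 1 * E t)) l (𝓝 0) := by
      refine hz.zero_smul_isBoundedUnder_le ⟨C, ?_⟩
      rw [eventually_map]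
      filter_upwards [hbd] with t ht
      refine (norm_mul_le _ _).trans ?_
      nlinarith [norm_Sh_le (𝒜 := 𝒜) 1, norm_nonneg (E t)]
    have hb : Tendsto (fun t => (M t : ℂ) • (1 : WAlg 𝒜)) l (𝓝 0) := by
      have : Tendsto (fun t => (M t : ℂ)) l (𝓝 0) := by
        simpa [Function.comp_def] using (Complex.continuous_ofReal.tendsto 0).comp hM
      simpa using this.smul_const (1 : WAlg 𝒜)
    simpa using ha.sub hb
  have hK₀J : Tendsto (fun t => E t * K₀) l (𝓝 0) := by
    have := sub_cst_ev_mem J hJ 1 hS K₀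
    rw [hK₀, map_zero, sub_zero] at this
    exact this
  have hd : Tendsto (fun t => E t * (K t - K₀)) l (𝓝 0) := by
    have : Tendsto (fun t => K t - K₀) l (𝓝 0) := by simpa using hK.sub_const K₀
    refine squeeze_zero_norm' (a := fun t => C * ‖K t - K₀‖) ?_ ?_
    · filter_upwards [hbd] with t ht
      exact (norm_mul_le _ _).trans (by gcongr)
    · simpa using this.norm.const_mul C
  have := hd.add hK₀J
  simp only [← mul_add, sub_add_cancel, add_zero] at this
  exact this

end Kernel

/-! ### Power series and their difference quotients -/

section Series
variable {𝒜 : Type*} [NormedRing 𝒜] [NormedAlgebra ℂ 𝒜] [CompleteSpace 𝒜] [NormOneClass 𝒜]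

/-- The power series `∑ aₙ zⁿ` in the Wiener algebra. -/
noncomputable def serR (a : ℕ → 𝒜) : WAlg 𝒜 := ∑' n, cst (a n) * Sh 1 ^ n

/-- The difference quotient `(a(1) - a(z)) / (1 - z) = ∑ aₙ (1 + z + ⋯ + zⁿ⁻¹)` of the power series
`a(z) = ∑ aₙ zⁿ`, in the Wiener algebra. -/
noncomputable def serD (a : ℕ → 𝒜) : WAlg 𝒜 := ∑' n, cst (a n) * ∑ j ∈ Finset.range n, Sh 1 ^ j

lemma norm_Sh_pow_le (n : ℕ) : ‖(Sh 1 : WAlg 𝒜) ^ n‖ ≤ 1 := by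
  rw [← Sh_natCast]; exact norm_Sh_le _

lemma norm_serR_term_le {a : ℕ → 𝒜} (h0 : a 0 = 0) (n : ℕ) :
    ‖cst (a n) * Sh 1 ^ n‖ ≤ n * ‖a n‖ := by
  rcases Nat.eq_zero_or_pos n with rfl | hn
  · simp [h0]
  · have h1 : (1 : ℝ) ≤ n := by exact_mod_cast hn
    calc _ ≤ ‖cst (a n)‖ * ‖(Sh 1 : WAlg 𝒜) ^ n‖ := norm_mul_le _ _
      _ ≤ ‖a n‖ * 1 := by gcongr; exacts [norm_cst_le _, norm_Sh_pow_le n]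
      _ ≤ n * ‖a n‖ := by nlinarith [norm_nonneg (a n)]

lemma norm_serD_term_le (a : ℕ → 𝒜) (n : ℕ) :
    ‖cst (a n) * ∑ j ∈ Finset.range n, (Sh 1 : WAlg 𝒜) ^ j‖ ≤ n * ‖a n‖ := by
  have h1 : ‖∑ j ∈ Finset.range n, (Sh 1 : WAlg 𝒜) ^ j‖ ≤ n := by
    simpa using norm_sum_le_of_le (Finset.range n) (fun j _ => norm_Sh_pow_le (𝒜 := 𝒜) j)
  calc _ ≤ ‖cst (a n)‖ * ‖∑ j ∈ Finset.range n, (Sh 1 : WAlg 𝒜) ^ j‖ := norm_mul_le _ _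
    _ ≤ ‖a n‖ * n := by gcongr; exact norm_cst_le _
    _ = _ := mul_comm _ _

variable {a : ℕ → 𝒜}

lemma serR_hasSum (h0 : a 0 = 0) (ha : Summable fun n : ℕ => (n : ℝ) * ‖a n‖) :
    HasSum (fun n => cst (a n) * Sh 1 ^ n) (serR a) :=
  (Summable.of_norm_bounded ha (norm_serR_term_le h0)).hasSum

lemma serD_hasSum (ha : Summable fun n : ℕ => (n : ℝ) * ‖a n‖) :
    HasSum (fun n => cst (a n) * ∑ j ∈ Finset.range n, Sh 1 ^ j) (serD a) :=
  (Summable.of_norm_bounded ha (norm_serD_term_le a)).hasSum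

lemma ev_serR (h0 : a 0 = 0) (ha : Summable fun n : ℕ => (n : ℝ) * ‖a n‖) (z : Circle) :
    HasSum (fun n => (z : ℂ) ^ n • a n) (ev z (serR a)) := by
  have h := (serR_hasSum h0 ha).map (ev z) (ev_continuous z)
  convert! h using 2 with n
  rw [Function.comp_apply, map_mul, ev_cst, map_pow, ev_Sh, zpow_one, ← map_pow,
    ← Algebra.commutes, Algebra.smul_def]

lemma ev_one_serD (ha : Summable fun n : ℕ => (n : ℝ) * ‖a n‖) :
    HasSum (fun n : ℕ => (n : ℂ) • a n) (ev 1 (serD a)) := by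
  have h := (serD_hasSum ha).map (ev 1) (ev_continuous 1)
  convert! h using 2 with n
  simp [ev_cst, ev_Sh, Algebra.smul_def, (Nat.cast_commute n (a n)).eq]

lemma cst_continuous : Continuous (cst : 𝒜 → WAlg 𝒜) :=
  AddMonoidHomClass.continuous_of_bound (cst (𝒜 := 𝒜)) 1
    (fun a => by rw [one_mul]; exact norm_cst_le a)

lemma one_sub_mul_serD (h0 : a 0 = 0) (ha : Summable fun n : ℕ => (n : ℝ) * ‖a n‖) :
    (1 - Sh 1) * serD a = cst (ev 1 (serR a)) - serR a := by
  have h1 := (serD_hasSum ha).mul_left (1 - Sh 1)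
  have h2 := ((ev_serR h0 ha 1).map (cst (𝒜 := 𝒜)) cst_continuous).sub (serR_hasSum h0 ha)
  refine h1.unique ?_
  convert! h2 using 2 with n
  have hc : Commute (1 - Sh 1 : WAlg 𝒜) (cst (a n)) :=
    (Commute.one_left _).sub_left (Sh_comm 1 _)
  rw [← mul_assoc, hc.eq, mul_assoc, mul_neg_geom_sum]
  simp [mul_sub]

lemma tendsto_ser {l : Filter ℝ} {A : ℝ → ℕ → 𝒜} {r : ℕ → ℝ}
    (hr : Summable fun n : ℕ => (n : ℝ) * r n)
    (hA0 : ∀ t, A t 0 = 0) (hAr : ∀ᶠ t in l, ∀ n, ‖A t n‖ ≤ r n)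
    (hA : ∀ n, Tendsto (fun t => A t n) l (𝓝 (a n))) :
    Tendsto (fun t => serR (A t)) l (𝓝 (serR a)) ∧
      Tendsto (fun t => serD (A t)) l (𝓝 (serD a)) := by
  constructor
  · refine tendsto_tsum_of_dominated_convergence hr
      (fun n => ((cst_continuous.tendsto _).comp (hA n)).mul_const _) ?_
    filter_upwards [hAr] with t ht n
    refine (norm_serR_term_le (hA0 t) n).trans ?_
    gcongr
    exact ht n
  · refine tendsto_tsum_of_dominated_convergence hr
      (fun n => ((cst_continuous.tendsto _).comp (hA n)).mul_const _) ?_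
    filter_upwards [hAr] with t ht n
    refine (norm_serD_term_le _ n).trans ?_
    gcongr
    exact ht n

end Series

/-! ### Factorization of the perturbed resolvent -/

/-- Let `p` and `P` be projections with the same kernel (`p P = p`, `P p = P`) and suppose that
`B p = l p + (1 - S) D p`. Then `B = F (1 + Y)` with `F = B (1 - p) + D p` and `Y = l G p - S p`,
where `G = F⁻¹`. Since `Y` vanishes on the kernel of `P`, the factor `1 + Y` is inverted through
its compression to the range of `P`; this compression is `N U` with the scalar factor
`N = 1 - (1 - κ) S`. -/
lemma factor_inverse {A : Type*} [Ring A] [Algebra ℂ A] {S p P B D F G U V N W : A} {l κ : ℂ}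
    (hS : ∀ x, S * x = x * S) (hP : P * P = P) (hpP : p * P = p) (hPp : P * p = P)
    (hB : B * p = l • p + (1 - S) * (D * p)) (hF : F = B * (1 - p) + D * p)
    (hFG : F * G = 1) (hGF : G * F = 1) (hN : N = 1 - (1 - κ) • S) (hWN : W * N = 1)
    (hNW : N * W = 1)
    (hU : U = 1 + W * (l • (P * G * p) - κ • (S * P))) (hUV : U * V = 1) (hVU : V * U = 1) :
    B * ((N - (l • (G * p) - S * p) * P * V) * G) = N ∧
      ((N - (l • (G * p) - S * p) * P * V) * G) * B = N := by
  have hpp : p * p = p := by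
    calc p * p = p * P * p := by rw [hpP]
      _ = p := by rw [mul_assoc, hPp, hpP]
  have hNc : ∀ x, N * x = x * N := fun x => by
    rw [hN, sub_mul, mul_sub, smul_mul_assoc, mul_smul_comm, hS x, one_mul, mul_one]
  have hWc : ∀ x, W * x = x * W := fun x => by
    calc W * x = W * x * (N * W) := by rw [hNW, mul_one]
      _ = W * (x * N) * W := by noncomm_ring
      _ = (W * N) * (x * W) := by rw [← hNc]; noncomm_ring
      _ = x * W := by rw [hWN, one_mul]
  set Y : A := l • (G * p) - S * p with hY
  have hYP : Y * P = Y := by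
    rw [hY, sub_mul, smul_mul_assoc, mul_assoc, mul_assoc, hpP]
  have hfac : F * (1 + Y) = B := by
    have h1 : F * p = D * p := by
      rw [hF, add_mul, mul_assoc, sub_mul, hpp, one_mul, sub_self, mul_zero, zero_add, mul_assoc,
        hpp]
    have h2 : F * (S * p) = S * (D * p) := by
      rw [← mul_assoc, ← hS, mul_assoc, h1]
    rw [hY, mul_add, mul_sub, mul_smul_comm, ← mul_assoc, hFG, one_mul, h2, mul_one]
    have h3 : l • p = B * p - (1 - S) * (D * p) := by rw [hB]; abel
    rw [h3, hF]
    noncomm_ring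
  set K : A := l • (P * G * p) - κ • (S * P) with hK
  have hPK : P * K = K := by
    rw [hK, mul_sub, mul_smul_comm, mul_smul_comm, ← mul_assoc, ← mul_assoc, hP, ← mul_assoc,
      ← hS, mul_assoc S, hP, mul_assoc]
  have hKP : K * P = K := by
    rw [hK, sub_mul, smul_mul_assoc, smul_mul_assoc, mul_assoc, mul_assoc _ _ P,
      hpP, hP]
  have hPU : P * U = U * P := by
    rw [hU, mul_add, add_mul, mul_one, one_mul, ← mul_assoc, ← hWc, mul_assoc, hPK, mul_assoc, hKP]
  have hPV : P * V = V * P := by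
    calc P * V = V * U * (P * V) := by rw [hVU, one_mul]
      _ = V * (U * P) * V := by noncomm_ring
      _ = V * P * (U * V) := by rw [← hPU]; noncomm_ring
      _ = V * P := by rw [hUV, mul_one]
  have hNUP : N * U * P = P + P * Y := by
    have h1 : N * U = N + K := by
      rw [hU, mul_add, mul_one, ← mul_assoc, hNW, one_mul]
    have h2 : P * (S * p) = S * P := by
      rw [← mul_assoc, ← hS, mul_assoc, hPp]
    rw [h1, add_mul, hKP, hK, hN, hY, mul_sub, mul_smul_comm, h2, sub_mul, one_mul,
      smul_mul_assoc, sub_smul, one_smul, ← mul_assoc]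
    abel
  have hR : (1 + Y) * (Y * P * V) = N * Y := by
    calc (1 + Y) * (Y * P * V) = (1 + Y) * (Y * P * P * V) := by rw [mul_assoc Y P P, hP]
      _ = (1 + Y * P) * (Y * P * P * V) := by rw [hYP]
      _ = Y * P * P * V + Y * P * Y * P * P * V := by noncomm_ring
      _ = Y * (P + P * Y) * P * V := by
        rw [mul_assoc (Y * P * Y) P P, mul_assoc Y P P, hP]
        have : Y * (P + P * Y) * P * V = Y * (P * P) * V + Y * P * Y * P * V := by noncomm_ring
        rw [this, hP]
      _ = Y * N * (U * (P * P) * V) := by rw [← hNUP]; noncomm_ring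
      _ = N * (Y * P) * (U * V) := by rw [hP, ← hPU, ← hNc]; noncomm_ring
      _ = N * Y := by rw [hUV, hYP, mul_one]
  have hL : (Y * P * V) * (1 + Y) = N * Y := by
    calc (Y * P * V) * (1 + Y) = Y * P * P * V * (1 + Y) := by rw [mul_assoc Y P P, hP]
      _ = Y * P * V * (P + P * Y) := by rw [mul_assoc (Y * P) P V, hPV]; noncomm_ring
      _ = Y * P * V * N * U * P := by rw [← hNUP]; noncomm_ring
      _ = Y * P * (N * V) * U * P := by rw [hNc V]; noncomm_ring
      _ = (Y * P) * N * (V * U) * P := by noncomm_ring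
      _ = N * (Y * P) := by rw [hVU, mul_one, hYP, mul_assoc, hNc P, ← mul_assoc, hYP, hNc]
      _ = N * Y := by rw [hYP]
  constructor
  · rw [← hfac]
    calc F * (1 + Y) * ((N - Y * P * V) * G)
        = F * ((1 + Y) * N - (1 + Y) * (Y * P * V)) * G := by noncomm_ring
      _ = F * N * G := by rw [hR, ← hNc]; noncomm_ring
      _ = N := by rw [← hNc, mul_assoc, hFG, mul_one]
  · rw [← hfac]
    calc ((N - Y * P * V) * G) * (F * (1 + Y))
        = (N - Y * P * V) * (G * F) * (1 + Y) := by noncomm_ring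
      _ = N * (1 + Y) - (Y * P * V) * (1 + Y) := by rw [hGF]; noncomm_ring
      _ = N := by rw [hL]; noncomm_ring

section Convergence
variable {𝒜 : Type*} [NormedRing 𝒜] [NormedAlgebra ℂ 𝒜] [CompleteSpace 𝒜] [NormOneClass 𝒜]

lemma norm_one_sub_mul_le {a : ℂ} {m : ℝ} (hm : 0 ≤ m) (h1 : m * a.re ≤ 1)
    (h2 : m * (a.re ^ 2 + a.im ^ 2) ≤ a.re) : ‖1 - a * (m : ℂ)‖ ≤ 1 - m * (a.re / 2) := by
  refine abs_le_of_sq_le_sq' ?_ (by linarith) |>.2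
  rw [← Complex.normSq_eq_norm_sq, Complex.normSq_apply]
  simp only [Complex.sub_re, Complex.sub_im, Complex.one_re, Complex.one_im, Complex.mul_re,
    Complex.mul_im, Complex.ofReal_re, Complex.ofReal_im]
  nlinarith [mul_le_mul_of_nonneg_left h2 hm, sq_nonneg (m * a.re)]

/-- A family `B t`, whose values at `z = 1` have eigenvalues `(c + b t) M t` tending to `0` with
eigenprojections tending to `P`, is inverted up to the scalar factor `1 - (1 - (c / μ) M t) z` by a
convergent family in the Wiener algebra. The number `μ` is the derivative at `z = 1` seen through
`P`; it makes the compression `1 + (M t) (1 - ρ z)⁻¹ K t` tend to `1`, because the limit of `K t`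
vanishes at `z = 1`. -/
lemma exists_tendsto_inverse {ι : Type*} {l : Filter ι}
    {P : 𝒜} {B D : ι → WAlg 𝒜} {B₀ D₀ : WAlg 𝒜} {p : ι → 𝒜} {b : ι → ℂ} {M : ι → ℝ}
    {c : ℂ} {μ : ℝ} (hμ : 0 < μ) (hc : 0 < c.re) (hP : P * P = P)
    (hB : Tendsto B l (𝓝 B₀)) (hD : Tendsto D l (𝓝 D₀)) (hp : Tendsto p l (𝓝 P))
    (hb : Tendsto b l (𝓝 0)) (hM : Tendsto M l (𝓝 0)) (hMpos : ∀ᶠ t in l, 0 < M t)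
    (hpP : ∀ᶠ t in l, p t * P = p t) (hPp : ∀ᶠ t in l, P * p t = P)
    (hBp : ∀ᶠ t in l, B t * cst (p t) =
      ((c + b t) * (M t : ℂ)) • cst (p t) + (1 - Sh 1) * (D t * cst (p t)))
    (hF₀ : IsUnit (B₀ * (1 - cst P) + D₀ * cst P))
    (hF₁ : P * ev 1 (B₀ * (1 - cst P) + D₀ * cst P) = (μ : ℂ) • P) :
    ∃ (T : ι → WAlg 𝒜) (T₀ : WAlg 𝒜), Tendsto T l (𝓝 T₀) ∧
      ∀ᶠ t in l, ‖1 - (c / μ) * (M t : ℂ)‖ < 1 ∧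
        B t * T t = 1 - (1 - (c / μ) * (M t : ℂ)) • Sh 1 ∧
        T t * B t = 1 - (1 - (c / μ) * (M t : ℂ)) • Sh 1 := by
  have hμ' : (μ : ℂ) ≠ 0 := by exact_mod_cast hμ.ne'
  set F₀ := B₀ * (1 - cst P) + D₀ * cst P with hF₀def
  set F : ι → WAlg 𝒜 := fun t => B t * (1 - cst (p t)) + D t * cst (p t) with hFdef
  have hcp : Tendsto (fun t => cst (p t)) l (𝓝 (cst P)) := (cst_continuous.tendsto _).comp hp
  have hF : Tendsto F l (𝓝 F₀) := (hB.mul (hcp.const_sub 1)).add (hD.mul hcp)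
  have hFu : ∀ᶠ t in l, IsUnit (F t) := hF.eventually (Units.isOpen.mem_nhds hF₀)
  have hG : Tendsto (fun t => Ring.inverse (F t)) l (𝓝 (Ring.inverse F₀)) := by
    obtain ⟨u, hu⟩ := hF₀
    have := NormedRing.inverse_continuousAt u
    rw [hu] at this
    exact this.tendsto.comp hF
  set G : ι → WAlg 𝒜 := fun t => Ring.inverse (F t) with hGdef
  set a : ℂ := c / μ with ha
  have hare : 0 < a.re := by
    rw [ha, Complex.div_ofReal_re]; positivity
  have hM' : Tendsto (fun t => (M t : ℂ)) l (𝓝 0) := by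
    simpa [Function.comp_def] using (Complex.continuous_ofReal.tendsto 0).comp hM
  set ρ : ι → ℂ := fun t => 1 - a * (M t : ℂ) with hρdef
  have hρ : Tendsto ρ l (𝓝 1) := by simpa using (hM'.const_mul a).const_sub 1
  have hρle : ∀ᶠ t in l, ‖ρ t‖ ≤ 1 - M t * (a.re / 2) := by
    have e1 : ∀ᶠ t in l, M t * a.re < 1 :=
      (hM.mul_const a.re).eventually (gt_mem_nhds (by simp))
    have e2 : ∀ᶠ t in l, M t * (a.re ^ 2 + a.im ^ 2) < a.re :=
      (hM.mul_const _).eventually (gt_mem_nhds (by simpa using hare))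
    filter_upwards [hMpos, e1, e2] with t h0 h1 h2
    exact norm_one_sub_mul_le h0.le h1.le h2.le
  have hρ1 : ∀ᶠ t in l, ‖ρ t‖ < 1 := by
    filter_upwards [hρle, hMpos] with t h1 h2
    nlinarith
  have hMρ : ∀ᶠ t in l, |M t| ≤ (2 / a.re) * (1 - ‖ρ t‖) := by
    filter_upwards [hρle, hMpos] with t h1 h2
    rw [abs_of_pos h2, div_mul_eq_mul_div, le_div_iff₀ hare]
    linarith
  set K : ι → WAlg 𝒜 := fun t => (c + b t) • (cst P * G t * cst (p t)) - a • (Sh 1 * cst P)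
    with hKdef
  have hcb : Tendsto (fun t => c + b t) l (𝓝 c) := by simpa using hb.const_add c
  have hK : Tendsto K l (𝓝 (c • (cst P * Ring.inverse F₀ * cst P) - a • (Sh 1 * cst P))) :=
    (hcb.smul ((hG.const_mul (cst P)).mul hcp)).sub_const _
  have hK₀ : ev 1 (c • (cst P * Ring.inverse F₀ * cst P) - a • (Sh 1 * cst P)) = 0 := by
    have h1 : P * ev 1 (Ring.inverse F₀) = (μ : ℂ)⁻¹ • P := by
      have h2 : ev 1 F₀ * ev 1 (Ring.inverse F₀) = 1 := by
        rw [← map_mul, Ring.mul_inverse_cancel _ hF₀, map_one]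
      have h3 : (μ : ℂ) • (P * ev 1 (Ring.inverse F₀)) = P := by
        rw [← smul_mul_assoc, ← hF₁, mul_assoc, h2, mul_one]
      rw [← h3, smul_smul, inv_mul_cancel₀ hμ', one_smul, h3]
    simp only [map_sub, map_smul, map_mul, ev_cst, ev_Sh, h1, Circle.coe_one, one_zpow, map_one,
      one_mul, smul_mul_assoc, hP, smul_smul]
    rw [ha, div_eq_mul_inv, sub_self]
  have hker := tendsto_kernel_mul hM hρ hρ1 hMρ hK hK₀
  set W : ι → WAlg 𝒜 := fun t => Ring.inverse (1 - ρ t • (Sh 1 : WAlg 𝒜)) with hW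
  set U : ι → WAlg 𝒜 := fun t => 1 + ((M t : ℂ) • W t) * K t with hUdef
  have hU : Tendsto U l (𝓝 1) := by
    have h := hker.const_add 1
    rwa [add_zero] at h
  have hUu : ∀ᶠ t in l, IsUnit (U t) := hU.eventually (Units.isOpen.mem_nhds isUnit_one)
  have hV : Tendsto (fun t => Ring.inverse (U t)) l (𝓝 1) := by
    have := NormedRing.inverse_continuousAt (1 : (WAlg 𝒜)ˣ)
    simpa [Function.comp_def] using this.tendsto.comp hU
  have hl : Tendsto (fun t => (c + b t) * (M t : ℂ)) l (𝓝 0) := by simpa using hcb.mul hM'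
  refine ⟨fun t => ((1 - ρ t • Sh 1) - (((c + b t) * (M t : ℂ)) • (G t * cst (p t)) -
    Sh 1 * cst (p t)) * cst P * Ring.inverse (U t)) * G t, _,
    Tendsto.mul (Tendsto.sub ((hρ.smul_const _).const_sub 1) (Tendsto.mul (Tendsto.mul_const _
      (Tendsto.sub (hl.smul (hG.mul hcp)) (hcp.const_mul _))) hV)) hG, ?_⟩
  filter_upwards [hρ1, hUu, hFu, hBp, hpP, hPp] with t h1 h2 h3 h4 h5 h6
  refine ⟨h1, ?_⟩
  have hN := isUnit_one_sub_smul_Sh (𝒜 := 𝒜) h1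
  refine factor_inverse (S := Sh 1) (p := cst (p t)) (P := cst P) (B := B t) (D := D t)
    (F := F t) (G := G t) (U := U t) (N := 1 - ρ t • Sh 1) (W := W t)
    (l := (c + b t) * (M t : ℂ)) (κ := a * (M t : ℂ)) (fun x => (Sh_comm 1 x).eq)
    (by rw [← map_mul, hP]) (by rw [← map_mul, h5]) (by rw [← map_mul, h6]) h4 rfl
    (Ring.mul_inverse_cancel _ h3) (Ring.inverse_mul_cancel _ h3) rfl
    (Ring.inverse_mul_cancel _ hN) (Ring.mul_inverse_cancel _ hN) ?_
    (Ring.mul_inverse_cancel _ h2) (Ring.inverse_mul_cancel _ h2)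
  simp only [hUdef, hKdef]
  rw [smul_mul_assoc, ← mul_smul_comm, smul_sub, smul_smul, smul_smul, mul_comm (M t : ℂ),
    mul_comm (M t : ℂ)]

/-- The limit function `F₀ = B₀ (1 - P) + D₀ P` of the factorization is invertible: away from
`z = 1` it is `B₀(z)` times an invertible operator, and at `z = 1` its inverse is explicit in terms
of the reduced resolvent `Q`. -/
lemma isUnit_F₀ {a : ℕ → 𝒜} (h0 : a 0 = 0) (ha : Summable fun n : ℕ => (n : ℝ) * ‖a n‖)
    {P Q : 𝒜} {μ : ℂ} (hμ : μ ≠ 0) (hP : P * P = P)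
    (hPR : P * ev 1 (serR a) = P) (hRP : ev 1 (serR a) * P = P)
    (hQ1 : Q * (1 - ev 1 (serR a)) = 1 - P) (hQ2 : (1 - ev 1 (serR a)) * Q = 1 - P)
    (hPQ : P * Q = 0)
    (hD : P * ev 1 (serD a) * P = μ • P)
    (hinv : ∀ z : Circle, z ≠ 1 → IsUnit (1 - ev z (serR a))) :
    IsUnit ((1 - serR a) * (1 - cst P) + serD a * cst P) := by
  refine isUnit_of_ev _ fun z => ?_
  simp only [map_sub, map_mul, map_add, map_one, ev_cst]
  by_cases hz : z = 1
  · subst hz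
    set R₁ := ev 1 (serR a)
    set D₁ := ev 1 (serD a)
    have hF : (1 - R₁) * (1 - P) + D₁ * P = (1 - R₁) + D₁ * P := by
      rw [mul_sub, sub_mul 1 R₁ P, hRP]; noncomm_ring
    have hB1 : (1 - R₁) * P = 0 := by rw [sub_mul, hRP, one_mul, sub_self]
    have hB2 : P * (1 - R₁) = 0 := by rw [mul_sub, hPR, mul_one, sub_self]
    have e1 : D₁ * P * Q = 0 := by rw [mul_assoc, hPQ, mul_zero]
    have e2 : D₁ * P * P = D₁ * P := by rw [mul_assoc, hP]
    have e3 : P * (D₁ * P) = μ • P := by rw [← mul_assoc, hD]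
    have e4 : (1 - R₁) * (Q * (D₁ * P)) = D₁ * P - μ • P := by
      rw [← mul_assoc, hQ2, sub_mul, one_mul, e3]
    rw [hF, isUnit_iff_exists]
    refine ⟨Q + μ⁻¹ • P - μ⁻¹ • (Q * (D₁ * P)), ?_, ?_⟩
    · have e5 : D₁ * P * (Q * (D₁ * P)) = 0 := by rw [← mul_assoc, e1, zero_mul]
      simp only [add_mul, mul_add, mul_sub, mul_smul_comm, hQ2, hB1, e1, e2, e4, e5]
      match_scalars <;> field_simp <;> ring
    · have e6 : Q * (D₁ * P) * (1 - R₁) = 0 := by rw [mul_assoc, mul_assoc, hB2, mul_zero, mul_zero]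
      have e7 : Q * (D₁ * P) * (D₁ * P) = μ • (Q * (D₁ * P)) := by
        rw [mul_assoc, mul_assoc, e3, mul_smul_comm, mul_smul_comm]
      simp only [sub_mul _ (μ⁻¹ • _), add_mul, mul_add, smul_mul_assoc, hQ1, hB2, e3, e6, e7,
        smul_zero, smul_smul, inv_mul_cancel₀ hμ, one_smul]
      abel
  · have hz' : (1 - (z : ℂ)) ≠ 0 := by
      rw [sub_ne_zero]; intro h; exact hz (by ext; simpa using h.symm)
    have h1 := congrArg (ev z) (one_sub_mul_serD h0 ha)
    simp only [map_mul, map_sub, map_one, ev_Sh, ev_cst, zpow_one] at h1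
    have h2 : (1 - (z : ℂ)) • (ev z (serD a) * P) = (1 - ev z (serR a)) * P := by
      have : (1 - (z : ℂ)) • ev z (serD a) = ev 1 (serR a) - ev z (serR a) := by
        rw [← h1, Algebra.smul_def, map_sub, map_one]
      rw [← smul_mul_assoc, this, sub_mul, sub_mul, hRP, one_mul]
    have h3 : ev z (serD a) * P = (1 - ev z (serR a)) * ((1 - (z : ℂ))⁻¹ • P) := by
      rw [mul_smul_comm, ← h2, smul_smul, inv_mul_cancel₀ hz', one_smul]
    rw [h3, ← mul_add]
    refine (hinv z hz).mul (isUnit_iff_exists.2 ⟨(1 - P) + (1 - (z : ℂ)) • P, ?_, ?_⟩)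
    all_goals
      simp only [add_mul, mul_add, sub_mul, mul_sub, one_mul, mul_one, smul_mul_assoc,
        mul_smul_comm, hP]
      match_scalars <;> field_simp ; ring

end Convergence

/-! ### The perturbed eigenprojection -/

/-- Near a simple eigenvalue the eigenvector of a perturbed operator `R` can be normalised by the
unperturbed projection `P`: the rank one operator `p = (λ - R + P)⁻¹ P` has range in the
`λ`-eigenspace of `R` and satisfies `P p = P`. -/
lemma perturbed_projection {L : Type*} [NormedAddCommGroup L] [NormedSpace ℂ L]
    {P R : L →L[ℂ] L} {ν : ℂ}
    (hrank : Module.finrank ℂ (LinearMap.range (P : L →ₗ[ℂ] L)) = 1)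
    (hH : IsUnit (ν • (1 : L →L[ℂ] L) - R + P)) {w : L} (hw : w ≠ 0) (hRw : R w = ν • w) :
    P * (Ring.inverse (ν • (1 : L →L[ℂ] L) - R + P) * P) = P ∧
      R * (Ring.inverse (ν • (1 : L →L[ℂ] L) - R + P) * P) =
        ν • (Ring.inverse (ν • (1 : L →L[ℂ] L) - R + P) * P) := by
  set H := ν • (1 : L →L[ℂ] L) - R + P with hHdef
  have hHw : H w = P w := by simp [hHdef, hRw]
  have hinv : ∀ x, Ring.inverse H (H x) = x := fun x => by
    have := congrArg (fun T : L →L[ℂ] L => T x) (Ring.inverse_mul_cancel _ hH)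
    simpa using this
  have hw' : Ring.inverse H (P w) = w := by rw [← hHw, hinv]
  have hPw : P w ≠ 0 := fun h => hw (by rw [← hw', h, map_zero])
  have hspan : ∀ x, ∃ s : ℂ, P x = s • P w := by
    intro x
    obtain ⟨s, hs⟩ := (finrank_eq_one_iff_of_nonzero'
      (⟨P w, ⟨w, rfl⟩⟩ : LinearMap.range (P : L →ₗ[ℂ] L))
      (fun h => hPw (congrArg Subtype.val h))).1 hrank ⟨P x, ⟨x, rfl⟩⟩
    exact ⟨s, (congrArg Subtype.val hs).symm⟩
  constructor
  · ext x
    obtain ⟨s, hs⟩ := hspan x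
    simp [hs, hw']
  · ext x
    obtain ⟨s, hs⟩ := hspan x
    simp [hs, hw', hRw, smul_comm s ν]

end WienerAlg

open WienerAlg

/-- Under the renewal setup together with the perturbation hypotheses, for small `t ≠ 0`
the operator `(I - R(z,t))/(1 - (1 - (c/μ)M(|t|))z)` is invertible on `S¹`, its pointwise
inverse belongs to `A(𝒜)`, and it converges in `A(𝒜)`-norm, as `t → 0`, to the continuous
extension of `z ↦ ((I - R(z))/(1-z))⁻¹`. -/
theorem renewal_perturbed_inverse_convergence {L : Type*} [NormedAddCommGroup L] [NormedSpace ℂ L]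
    [CompleteSpace L]
    (R : ℕ → L →L[ℂ] L) (hR0 : R 0 = 0)
    (hRsum : Summable fun n : ℕ => (n : ℝ) * ‖R n‖)
    (P : L →L[ℂ] L) (hPne : P ≠ 0) (hPproj : P * P = P)
    (hPrank : Module.finrank ℂ (LinearMap.range (P : L →ₗ[ℂ] L)) = 1)
    (hPR : P * renewalRz R 1 = P) (hRP : renewalRz R 1 * P = P)
    (hker : ∃ Q : L →L[ℂ] L, Q * (1 - renewalRz R 1) = 1 - P ∧
      (1 - renewalRz R 1) * Q = 1 - P ∧ Q * P = 0 ∧ P * Q = 0)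
    (hinv : ∀ z : ℂ, ‖z‖ ≤ 1 → z ≠ 1 → IsUnit (1 - renewalRz R z))
    (μ : ℝ) (hμpos : 0 < μ)
    (hPRP : P * (∑' n : ℕ, (n : ℂ) • R n) * P = (μ : ℂ) • P)
    -- perturbation hypotheses
    (α₀ : ℝ) (hα₀ : 0 < α₀)
    (Rt : ℝ → ℕ → L →L[ℂ] L) (hRt0 : Rt 0 = R) (hRt00 : ∀ t, Rt t 0 = 0)
    (hRtcont : ∀ n, Tendsto (fun t => Rt t n) (𝓝 0) (𝓝 (R n)))
    (C : ℝ) (hC : 0 < C) (r : ℕ → ℝ) (hrR : ∀ n, ‖R n‖ ≤ r n)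
    (hrt : ∀ t ∈ Set.Icc (-α₀) α₀, ∀ n, ‖Rt t n‖ ≤ C * r n)
    (hrsum : Summable fun n : ℕ => (n : ℝ) * r n)
    (Mf : ℝ → ℝ) (hMcont : ContinuousOn Mf (Set.Ici 0))
    (hMzero : ∀ s ∈ Set.Ici (0:ℝ), (Mf s = 0 ↔ s = 0))
    (hMnonneg : ∀ s ∈ Set.Ici (0:ℝ), 0 ≤ Mf s)
    (c : ℂ) (hc : 0 < c.re)
    (lam : ℂ → ℝ → ℂ) (δ : ℝ) (hδ : 0 < δ) (U : Set (ℂ × ℝ))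
    (hU : U ∈ nhdsWithin ((1:ℂ), (0:ℝ)) (Metric.closedBall 0 1 ×ˢ Set.Icc (-α₀) α₀))
    (hUsub : U ⊆ Metric.closedBall 0 1 ×ˢ Set.Icc (-α₀) α₀)
    (hspec : ∀ p ∈ U,
      spectrum ℂ (renewalRzt Rt p.1 p.2) ∩ Metric.ball (1:ℂ) δ = {lam p.1 p.2})
    (hsimple : ∀ p ∈ U, ∃ Pp : L →L[ℂ] L, Pp ≠ 0 ∧ Pp * Pp = Pp ∧
      Module.finrank ℂ (LinearMap.range (Pp : L →ₗ[ℂ] L)) = 1 ∧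
      renewalRzt Rt p.1 p.2 * Pp = Pp * renewalRzt Rt p.1 p.2 ∧
      renewalRzt Rt p.1 p.2 * Pp = lam p.1 p.2 • Pp)
    (hlam1 : ∃ b : ℝ → ℂ, Tendsto b (𝓝 0) (𝓝 0) ∧
      ∀ᶠ t in 𝓝 (0:ℝ), lam 1 t = 1 - (c + b t) * ((Mf |t| : ℝ) : ℂ)) :
    ∃ S0 : ℂ → L →L[ℂ] L,
      ContinuousOn S0 (Metric.sphere (0:ℂ) 1) ∧
      (∀ z ∈ Metric.sphere (0:ℂ) 1, z ≠ 1 →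
        S0 z = (1 - z) • Ring.inverse (1 - renewalRz R z)) ∧
      (Summable fun n : ℤ => ‖fourierCoeffA S0 n‖) ∧
      (∀ᶠ t in 𝓝[≠] (0:ℝ),
        (∀ z ∈ Metric.sphere (0:ℂ) 1, IsUnit (1 - renewalRzt Rt z t)) ∧
        ContinuousOn
          (fun z => (1 - (1 - (c / (μ : ℂ)) * ((Mf |t| : ℝ) : ℂ)) * z) •
            Ring.inverse (1 - renewalRzt Rt z t)) (Metric.sphere (0:ℂ) 1) ∧
        Summable fun n : ℤ =>
          ‖fourierCoeffA (fun z => (1 - (1 - (c / (μ : ℂ)) * ((Mf |t| : ℝ) : ℂ)) * z) •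
            Ring.inverse (1 - renewalRzt Rt z t)) n‖) ∧
      Tendsto
        (fun t => ∑' n : ℤ,
          ‖fourierCoeffA (fun z => (1 - (1 - (c / (μ : ℂ)) * ((Mf |t| : ℝ) : ℂ)) * z) •
              Ring.inverse (1 - renewalRzt Rt z t) - S0 z) n‖)
        (𝓝[≠] (0:ℝ)) (𝓝 0) := by
  obtain ⟨Q, hQ1, hQ2, hQP, hPQ⟩ := hker
  obtain ⟨b, hb, hlam⟩ := hlam1
  obtain ⟨x₀, hx₀⟩ : ∃ x, P x ≠ 0 := by
    by_contra! h
    exact hPne (ContinuousLinearMap.ext h)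
  have : Nontrivial L := ⟨⟨P x₀, 0, hx₀⟩⟩
  have hIcc : ∀ᶠ t in 𝓝[≠] (0 : ℝ), t ∈ Set.Icc (-α₀) α₀ :=
    nhdsWithin_le_nhds (Icc_mem_nhds (by linarith) hα₀)
  have hrsum' : Summable fun n : ℕ => (n : ℝ) * (C * r n) := by
    simpa [mul_left_comm] using hrsum.mul_left C
  have hsum_t : ∀ t ∈ Set.Icc (-α₀) α₀, Summable fun n : ℕ => (n : ℝ) * ‖Rt t n‖ := fun t ht =>
    Summable.of_nonneg_of_le (fun n => by positivity)
      (fun n => by gcongr; exact hrt t ht n) hrsum'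
  have hev : ∀ w : Circle, ev w (serR R) = renewalRz R w := fun w =>
    (ev_serR hR0 hRsum w).tsum_eq.symm
  have hevt : ∀ t ∈ Set.Icc (-α₀) α₀, ∀ w : Circle,
      ev w (serR (Rt t)) = renewalRzt Rt w t := fun t ht w =>
    (ev_serR (hRt00 t) (hsum_t t ht) w).tsum_eq.symm
  obtain ⟨hserR, hserD⟩ := tendsto_ser (a := R) (l := 𝓝[≠] (0 : ℝ)) hrsum' hRt00
    (hIcc.mono fun t ht n => hrt t ht n) (fun n => (hRtcont n).mono_left nhdsWithin_le_nhds)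
  have hM : Tendsto (fun t : ℝ => Mf |t|) (𝓝[≠] 0) (𝓝 0) := by
    have h1 : Tendsto Mf (𝓝[Set.Ici 0] 0) (𝓝 0) := by
      have := hMcont 0 Set.self_mem_Ici
      rw [ContinuousWithinAt, (hMzero 0 Set.self_mem_Ici).2 rfl] at this
      exact this
    refine h1.comp (tendsto_nhdsWithin_iff.2 ⟨?_, Eventually.of_forall fun t => abs_nonneg t⟩)
    have : Tendsto (fun t : ℝ => |t|) (𝓝 0) (𝓝 0) := by simpa using (continuous_abs.tendsto (0:ℝ))
    exact this.mono_left nhdsWithin_le_nhds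
  have hMpos : ∀ᶠ t in 𝓝[≠] (0 : ℝ), 0 < Mf |t| := by
    filter_upwards [self_mem_nhdsWithin] with t ht
    refine lt_of_le_of_ne (hMnonneg _ (abs_nonneg t)) fun h => ht ?_
    exact abs_eq_zero.1 ((hMzero _ (abs_nonneg t)).1 h.symm)
  have hb' : Tendsto b (𝓝[≠] 0) (𝓝 0) := hb.mono_left nhdsWithin_le_nhds
  have hlam' : ∀ᶠ t in 𝓝[≠] (0 : ℝ), lam 1 t = 1 - (c + b t) * ((Mf |t| : ℝ) : ℂ) :=
    nhdsWithin_le_nhds hlam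
  have hlamt : Tendsto (fun t => lam 1 t) (𝓝[≠] 0) (𝓝 1) := by
    refine Tendsto.congr' (hlam'.mono fun t ht => ht.symm) ?_
    have h1 : Tendsto (fun t : ℝ => ((Mf |t| : ℝ) : ℂ)) (𝓝[≠] 0) (𝓝 0) := by
      simpa [Function.comp_def] using (Complex.continuous_ofReal.tendsto 0).comp hM
    simpa using ((hb'.const_add c).mul h1).const_sub 1
  have hUt : ∀ᶠ t in 𝓝[≠] (0 : ℝ), ((1 : ℂ), t) ∈ U := by
    have h1 : Tendsto (fun t : ℝ => ((1 : ℂ), t)) (𝓝[≠] 0)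
        (𝓝[Metric.closedBall 0 1 ×ˢ Set.Icc (-α₀) α₀] ((1:ℂ), (0:ℝ))) := by
      refine tendsto_nhdsWithin_iff.2 ⟨?_, ?_⟩
      · have : Continuous fun t : ℝ => ((1 : ℂ), t) := by fun_prop
        exact (this.tendsto 0).mono_left nhdsWithin_le_nhds
      · filter_upwards [hIcc] with t ht
        exact ⟨by simp, ht⟩
    exact h1 hU
  -- `H t` has the invertible limit `1 - R(1) + P`, with inverse `Q + P`; the perturbed
  -- projection `H(t)⁻¹ P` therefore tends to `(Q + P) P = P`
  have hR1 : ev 1 (serR R) = renewalRz R 1 := by simpa using hev 1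
  set H : ℝ → L →L[ℂ] L := fun t => lam 1 t • (1 : L →L[ℂ] L) - ev 1 (serR (Rt t)) + P with hH
  have hHt : Tendsto H (𝓝[≠] 0) (𝓝 (1 - renewalRz R 1 + P)) := by
    have h1 : Tendsto (fun t => ev 1 (serR (Rt t))) (𝓝[≠] 0) (𝓝 (renewalRz R 1)) := by
      rw [← hR1]
      exact ((ev_continuous 1).tendsto _).comp hserR
    simpa using ((hlamt.smul_const (1 : L →L[ℂ] L)).sub h1).add_const P
  have hB1 : (1 - renewalRz R 1) * P = 0 := by rw [sub_mul, hRP, one_mul, sub_self]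
  have hB2 : P * (1 - renewalRz R 1) = 0 := by rw [mul_sub, hPR, mul_one, sub_self]
  have hH1 : (1 - renewalRz R 1 + P) * (Q + P) = 1 := by
    rw [add_mul, mul_add, mul_add, hQ2, hB1, hPQ, hPproj]; abel
  have hH2 : (Q + P) * (1 - renewalRz R 1 + P) = 1 := by
    rw [add_mul, mul_add, mul_add, hQ1, hB2, hQP, hPproj]; abel
  let u : (L →L[ℂ] L)ˣ := ⟨1 - renewalRz R 1 + P, Q + P, hH1, hH2⟩
  have hHu : ∀ᶠ t in 𝓝[≠] (0 : ℝ), IsUnit (H t) :=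
    hHt.eventually (Units.isOpen.mem_nhds u.isUnit)
  set p : ℝ → L →L[ℂ] L := fun t => Ring.inverse (H t) * P with hp
  have hpt : Tendsto p (𝓝[≠] 0) (𝓝 P) := by
    have h1 : Tendsto (fun t => Ring.inverse (H t)) (𝓝[≠] 0) (𝓝 (Q + P)) := by
      have h2 := (NormedRing.inverse_continuousAt u).tendsto
      rw [Ring.inverse_unit] at h2
      exact h2.comp hHt
    have h3 := h1.mul_const P
    rwa [add_mul, hQP, hPproj, zero_add] at h3
  have hpe : ∀ᶠ t in 𝓝[≠] (0 : ℝ), P * p t = P ∧ ev 1 (serR (Rt t)) * p t = lam 1 t • p t := by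
    filter_upwards [hUt, hHu, hIcc] with t h1 h2 h3
    obtain ⟨Pp, hPp0, -, -, -, hPp⟩ := hsimple _ h1
    obtain ⟨y, hy⟩ : ∃ y, Pp y ≠ 0 := by
      by_contra! h
      exact hPp0 (ContinuousLinearMap.ext h)
    refine perturbed_projection hPrank h2 hy ?_
    have h4 : ev 1 (serR (Rt t)) = renewalRzt Rt 1 t := by simpa using hevt t h3 1
    rw [h4]
    exact congrArg (fun T : L →L[ℂ] L => T y) hPp
  have hBp : ∀ᶠ t in 𝓝[≠] (0 : ℝ), (1 - serR (Rt t)) * cst (p t) =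
      ((c + b t) * ((Mf |t| : ℝ) : ℂ)) • cst (p t) +
        (1 - Sh 1) * (serD (Rt t) * cst (p t)) := by
    filter_upwards [hpe, hIcc, hlam'] with t h1 h2 h3
    rw [← mul_assoc, one_sub_mul_serD (hRt00 t) (hsum_t t h2), sub_mul, sub_mul, one_mul,
      ← map_mul, h1.2, map_smul, h3]
    module
  have hμ' : (μ : ℂ) ≠ 0 := by exact_mod_cast hμpos.ne'
  have hD1 : ev 1 (serD R) = ∑' n : ℕ, (n : ℂ) • R n := (ev_one_serD hRsum).tsum_eq.symm
  have hF₀ : IsUnit ((1 - serR R) * (1 - cst P) + serD R * cst P) := by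
    refine isUnit_F₀ hR0 hRsum (Q := Q) hμ' hPproj (by rw [hR1, hPR]) (by rw [hR1, hRP])
      (by rw [hR1, hQ1]) (by rw [hR1, hQ2]) hPQ (by rw [hD1, hPRP]) fun w hw => ?_
    rw [hev]
    exact hinv _ (Circle.norm_coe w).le fun h => hw (by ext; simpa using h)
  have hF₁ : P * ev 1 ((1 - serR R) * (1 - cst P) + serD R * cst P) = (μ : ℂ) • P := by
    simp only [map_add, map_mul, map_sub, map_one, ev_cst]
    rw [hR1, hD1, mul_add, ← mul_assoc, hB2, zero_mul, zero_add, ← mul_assoc, hPRP]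
  obtain ⟨T, T₀, hT, hTe⟩ := exists_tendsto_inverse (l := 𝓝[≠] (0 : ℝ)) hμpos hc hPproj
    (hserR.const_sub 1) hserD hpt hb' hM hMpos
    (Eventually.of_forall fun t => by simp only [hp]; rw [mul_assoc, hPproj])
    (hpe.mono fun t ht => ht.1) hBp hF₀ hF₁
  -- this identity is the limit of `(1 - R(z, t)) T(t) = 1 - ρ(t) z`
  have hlim : (1 - serR R) * T₀ = 1 - Sh 1 := by
    have h1 : Tendsto (fun t => (1 - serR (Rt t)) * T t) (𝓝[≠] (0:ℝ)) (𝓝 ((1 - serR R) * T₀)) :=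
      (hserR.const_sub 1).mul hT
    have h2 : Tendsto (fun t => (1 - serR (Rt t)) * T t) (𝓝[≠] (0:ℝ)) (𝓝 (1 - Sh 1)) := by
      refine Tendsto.congr' (hTe.mono fun t ht => ht.2.1.symm) ?_
      have h3 : Tendsto (fun t : ℝ => ((Mf |t| : ℝ) : ℂ)) (𝓝[≠] 0) (𝓝 0) := by
        simpa [Function.comp_def] using (Complex.continuous_ofReal.tendsto 0).comp hM
      simpa using (((h3.const_mul (c / μ)).const_sub 1).smul_const
        (Sh 1 : WAlg (L →L[ℂ] L))).const_sub 1
    exact tendsto_nhds_unique h1 h2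
  have hpt : ∀ᶠ t in 𝓝[≠] (0 : ℝ),
      (∀ z ∈ Metric.sphere (0:ℂ) 1, IsUnit (1 - renewalRzt Rt z t)) ∧
      Set.EqOn (fun z => (1 - (1 - (c / (μ : ℂ)) * ((Mf |t| : ℝ) : ℂ)) * z) •
            Ring.inverse (1 - renewalRzt Rt z t)) (evF (T t)) (Metric.sphere (0:ℂ) 1) := by
    filter_upwards [hTe, hIcc] with t ⟨h1, h2, h3⟩ h4
    set ρ : ℂ := 1 - (c / (μ : ℂ)) * ((Mf |t| : ℝ) : ℂ)
    have key : ∀ w : Circle, IsUnit (1 - renewalRzt Rt w t) ∧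
        (1 - ρ * w) • Ring.inverse (1 - renewalRzt Rt w t) = ev w (T t) := by
      intro w
      have hN := isUnit_one_sub_smul_Sh (𝒜 := L →L[ℂ] L) h1
      rw [← hevt t h4 w]
      have hBu : IsUnit (1 - serR (Rt t)) := by
        refine isUnit_iff_exists_and_exists.2 ⟨⟨T t * Ring.inverse (1 - ρ • Sh 1), ?_⟩,
          ⟨Ring.inverse (1 - ρ • Sh 1) * T t, ?_⟩⟩
        · rw [← mul_assoc, h2, Ring.mul_inverse_cancel _ hN]
        · rw [mul_assoc, h3, Ring.inverse_mul_cancel _ hN]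
      have hu : IsUnit (1 - ev w (serR (Rt t))) := by
        simpa using hBu.map (ev w)
      refine ⟨hu, ?_⟩
      have h5 := congrArg (ev w) h2
      simp only [map_mul, map_sub, map_one, map_smul, ev_Sh, zpow_one] at h5
      have h6 : (1 : L →L[ℂ] L) - ρ • algebraMap ℂ (L →L[ℂ] L) (w : ℂ) =
          (1 - ρ * w) • (1 : L →L[ℂ] L) := by
        rw [Algebra.algebraMap_eq_smul_one, smul_smul, sub_smul, one_smul]
      rw [h6] at h5
      calc (1 - ρ * w) • Ring.inverse (1 - ev w (serR (Rt t)))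
          = Ring.inverse (1 - ev w (serR (Rt t))) * ((1 - ρ * w) • (1 : L →L[ℂ] L)) := by
            rw [mul_smul_comm, mul_one]
        _ = ev w (T t) := by
            rw [← h5, ← mul_assoc, Ring.inverse_mul_cancel _ hu, one_mul]
    constructor
    · intro z hz
      obtain ⟨w, rfl⟩ : ∃ w : Circle, (w : ℂ) = z := ⟨⟨z, hz⟩, rfl⟩
      exact (key w).1
    · intro z hz
      obtain ⟨w, rfl⟩ : ∃ w : Circle, (w : ℂ) = z := ⟨⟨z, hz⟩, rfl⟩
      rw [evF_coe]
      exact (key w).2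
  refine ⟨evF T₀, evF_continuousOn T₀, ?_, summable_fourierCoeffA T₀, ?_, ?_⟩
  · intro z hz hz1
    obtain ⟨w, rfl⟩ : ∃ w : Circle, (w : ℂ) = z := ⟨⟨z, hz⟩, rfl⟩
    have hu : IsUnit (1 - renewalRz R w) := hinv _ (Circle.norm_coe w).le hz1
    have h5 := congrArg (ev w) hlim
    simp only [map_mul, map_sub, map_one, ev_Sh, zpow_one, hev] at h5
    have h6 : (1 : L →L[ℂ] L) - algebraMap ℂ (L →L[ℂ] L) (w : ℂ) =
        (1 - (w : ℂ)) • (1 : L →L[ℂ] L) := by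
      rw [Algebra.algebraMap_eq_smul_one, sub_smul, one_smul]
    rw [h6] at h5
    rw [evF_coe]
    calc ev w T₀ = Ring.inverse (1 - renewalRz R w) * ((1 - (w : ℂ)) • (1 : L →L[ℂ] L)) := by
          rw [← h5, ← mul_assoc, Ring.inverse_mul_cancel _ hu, one_mul]
      _ = _ := by rw [mul_smul_comm, mul_one]
  · filter_upwards [hpt] with t ⟨h1, h2⟩
    refine ⟨h1, (evF_continuousOn (T t)).congr h2, ?_⟩
    simpa only [fourierCoeffA_congr h2] using summable_fourierCoeffA (T t)
  · refine squeeze_zero' (g := fun t => ‖T t - T₀‖)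
      (Eventually.of_forall fun t => tsum_nonneg fun n => norm_nonneg _) ?_ ?_
    · filter_upwards [hpt] with t ⟨h1, h2⟩
      refine le_trans (le_of_eq (tsum_congr fun n => ?_)) (tsum_fourierCoeffA_le (T t - T₀))
      congr 1
      refine fourierCoeffA_congr (fun z hz => ?_) n
      have h3 := h2 hz
      simp only at h3
      rw [evF_sub _ _ hz, ← h3]
    · simpa using (hT.sub_const T₀).norm
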